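/- arXiv:2107.00550 — 2 statements merged into one kernel-verified Lean document; each statement's English description precedes it below -/
import Mathlib

section
/- For every k ≥ 2, the space of [k]-graphons modulo cut distance is compact: every sequence (W_n)_{n∈ℕ} of [k]-graphons has a subsequence (W_{n_j}) and a [k]-graphon W such that δ_{□,k}(W_{n_j}, W) → 0 as j → ∞. -/
open MeasureTheory Filter Set

noncomputable section

/-- A `[k]`-graphon: a symmetric measurable function `W : [0,1]² → Δ([k])`, recorded
via its components `W x y i = W(x,y)(i)`. -/
structure KGraphon (k : ℕ) where
  W : unitInterval → unitInterval → Fin k → ℝ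
  symm : ∀ x y, W x y = W y x
  meas : ∀ i : Fin k, Measurable fun p : unitInterval × unitInterval => W p.1 p.2 i
  nonneg : ∀ x y i, 0 ≤ W x y i
  sum_one : ∀ x y, ∑ i, W x y i = 1

/-- The cut distance `δ_{□,k}` between two `[k]`-graphons: the infimum over measure
preserving bijections `φ` of the supremum over measurable `S, T ⊆ [0,1]` of
`Σ_i |∫_{S×T} (U_i(x,y) − W_i(φ x, φ y))|`. -/
def cutDistK {k : ℕ} (U V : KGraphon k) : ℝ :=
  ⨅ φ : {φ : unitInterval → unitInterval //
      MeasurePreserving φ volume volume ∧ Function.Bijective φ},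
    ⨆ S : {S : Set unitInterval // MeasurableSet S},
      ⨆ T : {T : Set unitInterval // MeasurableSet T},
        ∑ i : Fin k,
          |∫ p in S.1 ×ˢ T.1, (U.W p.1 p.2 i - V.W (φ.1 p.1) (φ.1 p.2) i)|

/-!
A square-integrable kernel is close in cut norm to a step kernel `∑ j, c j • 1_{S j × T j}` whose
number of terms depends only on the accuracy and the `L²` bound: greedily subtract from the kernel
its projections onto indicators of rectangles. Do this for the components of all the `W n` and all
accuracies `1 / (m + 1)`. For each `n` this leaves countably many measurable sets, whose indicators,
together with a countable family separating points, form an injective code of the points by the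
Cantor set in `[0,1]`. Sorting the points by their code is a measure-preserving bijection of `[0,1]`
after which the code is a monotone function, so by Helly's selection theorem the rearranged codes,
and hence the rearranged sets, converge almost everywhere along a subsequence. Consequently the
rearranged step kernels converge in `L¹`, and the rearranged graphons are Cauchy in cut norm. A weak
`L²` limit of a cut-norm Cauchy sequence is its limit in cut norm, and being nonnegative, symmetric
and of total mass one passes to weak limits.
-/

open ProbabilityTheory Topology TopologicalSpace
open scoped NNReal

section MeasureIsomorphism

variable {α β : Type*} [MeasurableSpace α] [MeasurableSpace β]

lemma uncountable_of_nullSingletonClass (μ : Measure α) [NeZero μ] [NullSingletonClass μ] :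
    Uncountable α := by
  rw [← not_countable_iff]
  intro _
  exact NeZero.ne μ (Measure.measure_univ_eq_zero.1 (countable_univ.measure_zero μ))

variable [StandardBorelSpace α] [StandardBorelSpace β]

lemma exists_null_not_countable [Uncountable α] (μ : Measure α) [SFinite μ] :
    ∃ C, MeasurableSet C ∧ μ C = 0 ∧ ¬ C.Countable := by
  have hα : ¬ Countable α := not_countable
  -- `α` splits into uncountably many uncountable fibres, all but countably many of them null.
  let ψ : α ≃ᵐ α × α := PolishSpace.measurableEquivOfNotCountable hα fun _ =>
    hα (Function.Injective.countable (f := fun x : α => (x, x)) fun _ _ h => (Prod.ext_iff.1 h).1)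
  let fiber (x : α) : Set α := (fun z => (ψ z).1) ⁻¹' {x}
  have hfiber (x : α) : MeasurableSet (fiber x) :=
    (measurable_fst.comp ψ.measurable) (measurableSet_singleton x)
  have hpos : {x | 0 < μ (fiber x)}.Countable :=
    Measure.countable_meas_pos_of_disjoint_iUnion hfiber fun x y hxy =>
      (disjoint_singleton.2 hxy).preimage _
  obtain ⟨x, hx⟩ : ∃ x, x ∉ {x | 0 < μ (fiber x)} := by
    by_contra! h
    exact hα (countable_univ_iff.1 (hpos.mono fun x _ => h x))
  refine ⟨fiber x, hfiber x, by simpa using hx, fun hcount => hα ?_⟩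
  refine countable_univ_iff.1 ((hcount.image fun z => (ψ z).2).mono fun y _ => ?_)
  exact ⟨ψ.symm (x, y), by simp [fiber], by simp⟩

lemma exists_measurableEquiv_eqOn_of_injOn {e : α → β} (he : Measurable e) {s : Set α}
    (hs : MeasurableSet s) (hinj : InjOn e s) (hscompl : ¬ sᶜ.Countable)
    (himage : ¬ (e '' s)ᶜ.Countable) : ∃ φ : α ≃ᵐ β, EqOn φ e s := by
  classical
  rw [← range_domRestrict] at himage
  have := hs.standardBorel
  have := hs.compl.standardBorel
  have hemb : MeasurableEmbedding (s.domRestrict e) :=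
    (he.comp measurable_subtype_coe).measurableEmbedding (injOn_iff_injective.1 hinj)
  have := hemb.measurableSet_range.compl.standardBorel
  let ψ : ↑sᶜ ≃ᵐ ↑(range (s.domRestrict e))ᶜ := PolishSpace.measurableEquivOfNotCountable
    (mt countable_coe_iff.1 hscompl) (mt countable_coe_iff.1 himage)
  refine ⟨(MeasurableEquiv.sumCompl hs).symm.trans ((hemb.equivRange.sumCongr ψ).trans
    (MeasurableEquiv.sumCompl hemb.measurableSet_range)), fun x hx => ?_⟩
  have hsymm : (MeasurableEquiv.sumCompl hs).symm x = Sum.inl ⟨x, hx⟩ :=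
    Equiv.Set.sumCompl_symm_apply_of_mem hx
  have hcongr : hemb.equivRange.sumCongr ψ (Sum.inl ⟨x, hx⟩) =
      Sum.inl ⟨e x, mem_range_self (⟨x, hx⟩ : s)⟩ :=
    congrArg Sum.inl (hemb.equivRange_apply ⟨x, hx⟩)
  rw [MeasurableEquiv.trans_apply, MeasurableEquiv.trans_apply, hsymm, hcongr]
  rfl

/-- Two null sets, one in the domain and the preimage of one in the codomain, make room for
repairing `e` on a null set by a Borel isomorphism. -/
lemma exists_measurableEquiv_ae_eq_of_injOn [Uncountable α] [Uncountable β] {μ : Measure α}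
    {ν : Measure β} [SFinite μ] [SFinite ν] {e : α → β} (he : MeasurePreserving e μ ν)
    {s : Set α} (hs : s ∈ ae μ) (hinj : InjOn e s) :
    ∃ φ : α ≃ᵐ β, MeasurePreserving φ μ ν ∧ φ =ᵐ[μ] e := by
  obtain ⟨C, hC, hC0, hCu⟩ := exists_null_not_countable μ
  obtain ⟨C', hC', hC'0, hC'u⟩ := exists_null_not_countable ν
  let M : Set α := toMeasurable μ sᶜ ∪ C ∪ e ⁻¹' C'
  have hM : MeasurableSet M :=
    ((measurableSet_toMeasurable _ _).union hC).union (he.measurable hC')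
  have hM0 : μ M = 0 := by
    simp only [M, measure_union_null_iff, measure_toMeasurable,
      he.measure_preimage hC'.nullMeasurableSet]
    exact ⟨⟨hs, hC0⟩, hC'0⟩
  have hMs : Mᶜ ⊆ s := by
    rw [compl_subset_comm]
    exact (subset_toMeasurable μ sᶜ).trans (subset_union_left.trans subset_union_left)
  have hC'image : C' ⊆ (e '' Mᶜ)ᶜ := by
    rintro _ hx ⟨y, hy, rfl⟩
    exact hy (Or.inr hx)
  have hCM : C ⊆ Mᶜᶜ := by
    rw [compl_compl]
    exact subset_union_right.trans subset_union_left
  obtain ⟨φ, hφ⟩ := exists_measurableEquiv_eqOn_of_injOn he.measurable hM.compl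
    (hinj.mono hMs) (mt (Countable.mono hCM) hCu) (mt (Countable.mono hC'image) hC'u)
  have hae : φ =ᵐ[μ] e := by
    filter_upwards [compl_mem_ae_iff.2 hM0] with x hx using hφ hx
  exact ⟨φ, ⟨φ.measurable, (Measure.map_congr hae).trans he.map_eq⟩, hae⟩

end MeasureIsomorphism

section Sorting

lemma continuous_cdf (ν : Measure ℝ) [IsProbabilityMeasure ν] [NullSingletonClass ν] :
    Continuous (cdf ν) := by
  refine continuous_iff_continuousAt.2 fun a => ?_
  have ha : (cdf ν).measure {a} = 0 := by rw [measure_cdf, measure_singleton]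
  rw [StieltjesFunction.measure_singleton, ENNReal.ofReal_eq_zero, sub_nonpos] at ha
  rw [(cdf ν).mono.continuousAt_iff_leftLim_eq_rightLim, StieltjesFunction.rightLim_eq]
  exact le_antisymm ((cdf ν).mono.leftLim_le le_rfl) ha

lemma exists_cdf_eq (ν : Measure ℝ) [IsProbabilityMeasure ν] [NullSingletonClass ν] {s : ℝ}
    (hs : s ∈ Ioo 0 1) : ∃ t, cdf ν t = s :=
  mem_range_of_exists_le_of_exists_ge (continuous_cdf ν)
    ((tendsto_cdf_atBot ν).eventually (ge_mem_nhds hs.1)).exists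
    ((tendsto_cdf_atTop ν).eventually (le_mem_nhds hs.2)).exists

lemma measureReal_cdf_le (ν : Measure ℝ) [IsProbabilityMeasure ν] [NullSingletonClass ν] {s : ℝ}
    (hs : s ∈ Icc 0 1) : ν.real {t | cdf ν t ≤ s} = s := by
  refine le_antisymm (le_of_forall_gt_imp_ge_of_dense fun a ha => ?_)
    (le_of_forall_lt_imp_le_of_dense fun a ha => ?_)
  · rcases le_or_gt 1 a with h1 | h1
    · exact measureReal_le_one.trans h1
    obtain ⟨t, rfl⟩ := exists_cdf_eq ν ⟨hs.1.trans_lt ha, h1⟩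
    rw [cdf_eq_real ν t]
    exact measureReal_mono fun u hu => ((cdf ν).mono.reflect_lt (lt_of_le_of_lt hu ha)).le
  · rcases le_or_gt a 0 with h0 | h0
    · exact h0.trans measureReal_nonneg
    obtain ⟨t, rfl⟩ := exists_cdf_eq ν ⟨h0, ha.trans_le hs.2⟩
    rw [cdf_eq_real ν t]
    exact measureReal_mono fun u hu => (monotone_cdf ν hu).trans ha.le

lemma measurePreserving_cdf (ν : Measure ℝ) [IsProbabilityMeasure ν] [NullSingletonClass ν] :
    MeasurePreserving (fun t => (⟨cdf ν t, cdf_nonneg ν t, cdf_le_one ν t⟩ : unitInterval))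
      ν volume := by
  have hmeas : Measurable fun t => (⟨cdf ν t, cdf_nonneg ν t, cdf_le_one ν t⟩ : unitInterval) :=
    (monotone_cdf ν).measurable.subtype_mk
  refine ⟨hmeas, ?_⟩
  have := Measure.isProbabilityMeasure_map (μ := ν) hmeas.aemeasurable
  refine Measure.ext_of_Iic _ _ fun s => ?_
  rw [unitInterval.volume_Iic, Measure.map_apply hmeas measurableSet_Iic,
    ← measureReal_cdf_le ν s.2, ofReal_measureReal]
  rfl

variable {Ω : Type*} [MeasurableSpace Ω] {μ : Measure Ω} [IsProbabilityMeasure μ]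
  [NullSingletonClass μ]

/-- `e x` is the `μ`-measure of the points at which `Z` is at most `Z x`. -/
lemma exists_measurePreserving_ae_reflect_le {Z : Ω → ℝ} (hZ : Measurable Z)
    (hinj : Function.Injective Z) :
    ∃ e : Ω → unitInterval, MeasurePreserving e μ volume ∧
      ∀ᵐ x ∂μ, ∀ y, e y ≤ e x → Z y ≤ Z x := by
  have := Measure.isProbabilityMeasure_map (μ := μ) hZ.aemeasurable
  have : NullSingletonClass (μ.map Z) := ⟨fun t => by
    rw [Measure.map_apply hZ (measurableSet_singleton t)]
    exact (subsingleton_singleton.preimage hinj).measure_zero μ⟩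
  let F (t : ℝ) : unitInterval := ⟨cdf (μ.map Z) t, cdf_nonneg _ t, cdf_le_one _ t⟩
  have hF : Monotone F := monotone_cdf _
  have hmp : MeasurePreserving (F ∘ Z) μ volume :=
    (measurePreserving_cdf _).comp (hZ.measurePreserving μ)
  have hnull : ∀ᵐ x ∂μ, F (Z x) ∉ range fun r : ℚ => F r :=
    hmp.quasiMeasurePreserving.ae
      (measure_eq_zero_iff_ae_notMem.1 ((countable_range _).measure_zero volume))
  refine ⟨F ∘ Z, hmp, ?_⟩
  filter_upwards [hnull] with x hx y hyx
  by_contra! hlt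
  obtain ⟨r, hxr, hry⟩ := exists_rat_btwn hlt
  exact hx ⟨r, le_antisymm ((hF hry.le).trans hyx) (hF hxr.le)⟩

lemma monotone_iSup_le {Ω α β : Type*} [Preorder α] [CompleteLattice β] (e : Ω → α) (Z : Ω → β) :
    Monotone fun s => ⨆ (x) (_ : e x ≤ s), Z x :=
  fun _ _ hst => iSup_mono fun _ => iSup_mono' fun h => ⟨h.trans hst, le_rfl⟩

lemma exists_measurableEquiv_monotone_comp_ae_eq [StandardBorelSpace Ω] {Z : Ω → unitInterval}
    (hZ : Measurable Z) (hinj : Function.Injective Z) :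
    ∃ φ : Ω ≃ᵐ unitInterval, MeasurePreserving φ μ volume ∧
      ∃ q : unitInterval → unitInterval, Monotone q ∧ q ∘ φ =ᵐ[μ] Z := by
  obtain ⟨e, he, hle⟩ := exists_measurePreserving_ae_reflect_le (μ := μ)
    (measurable_subtype_coe.comp hZ) (Subtype.val_injective.comp hinj)
  have := uncountable_of_nullSingletonClass μ
  have := uncountable_of_nullSingletonClass (volume : Measure unitInterval)
  obtain ⟨φ, hφ, hφe⟩ := exists_measurableEquiv_ae_eq_of_injOn he hle fun x hx y hy hxy =>
    hinj (le_antisymm (hy x hxy.le) (hx y hxy.ge))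
  refine ⟨φ, hφ, _, monotone_iSup_le e Z, ?_⟩
  filter_upwards [hle, hφe] with x hx hφx
  rw [Function.comp_apply, hφx]
  exact le_antisymm (iSup₂_le hx) (le_iSup₂_of_le x le_rfl le_rfl)

end Sorting

section Helly

variable {α β : Type*} [LinearOrder α] [TopologicalSpace α] [OrderTopology α] [DenselyOrdered α]

lemma exists_mem_dense_le_mem_nhds {D U : Set α} {x : α} (hD : Dense D)
    (hbot : ∀ x, IsBot x → x ∈ D) (hU : U ∈ 𝓝 x) : ∃ d ∈ D, d ≤ x ∧ d ∈ U := by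
  by_cases hx : IsBot x
  · exact ⟨x, hbot x hx, le_rfl, mem_of_mem_nhds hU⟩
  obtain ⟨y, hy⟩ : ∃ y, y < x := by simpa [IsBot] using hx
  obtain ⟨l, hlx, hlU⟩ := exists_Ioc_subset_of_mem_nhds hU ⟨y, hy⟩
  obtain ⟨d, hd, hld, hdx⟩ := hD.exists_between hlx
  exact ⟨d, hd, hdx.le, hlU ⟨hld, hdx.le⟩⟩

lemma tendsto_of_monotone_of_dense {ι : Type*} [LinearOrder β] [TopologicalSpace β]
    [OrderTopology β] {l : Filter ι} {q : ι → α → β} {Q : α → β} {D : Set α} {x : α}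
    (hq : ∀ n, Monotone (q n)) (hD : Dense D) (hbot : ∀ x, IsBot x → x ∈ D)
    (htop : ∀ x, IsTop x → x ∈ D) (hlim : ∀ d ∈ D, Tendsto (fun n => q n d) l (𝓝 (Q d)))
    (hx : ContinuousAt Q x) : Tendsto (fun n => q n x) l (𝓝 (Q x)) := by
  refine tendsto_order.2 ⟨fun a ha => ?_, fun a ha => ?_⟩
  · obtain ⟨d, hd, hdx, had⟩ :=
      exists_mem_dense_le_mem_nhds hD hbot (hx.eventually (lt_mem_nhds ha))
    exact ((hlim d hd).eventually (lt_mem_nhds had)).mono fun n hn => hn.trans_le (hq n hdx)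
  · obtain ⟨d, hd, hxd, hda⟩ :=
      exists_mem_dense_le_mem_nhds (α := αᵒᵈ) hD htop (hx.eventually (gt_mem_nhds ha))
    exact ((hlim d hd).eventually (gt_mem_nhds hda)).mono fun n hn => (hq n hxd).trans_lt hn

lemma exists_subseq_tendsto_of_monotone [SeparableSpace α] [CompleteLinearOrder β]
    [TopologicalSpace β] [OrderTopology β] [SecondCountableTopology β] {q : ℕ → α → β}
    (hq : ∀ n, Monotone (q n)) :
    ∃ g : ℕ → ℕ, StrictMono g ∧ ∃ Q : α → β, Monotone Q ∧
      {x | ¬ Tendsto (fun n => q (g n) x) atTop (𝓝 (Q x))}.Countable := by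
  obtain ⟨D, hDc, hD, hbot, htop⟩ := exists_countable_dense_bot_top α
  have := hDc.to_subtype
  obtain ⟨L, g, hg, hL⟩ := CompactSpace.tendsto_subseq fun n (d : D) => q n d
  let Q (x : α) : β := limsup (fun n => q (g n) x) atTop
  have hQ : Monotone Q := fun x y hxy => limsup_le_limsup (.of_forall fun n => hq (g n) hxy)
  have hlim : ∀ d ∈ D, Tendsto (fun n => q (g n) d) atTop (𝓝 (Q d)) := fun d hd => by
    have h : Tendsto (fun n => q (g n) d) atTop (𝓝 (L ⟨d, hd⟩)) := tendsto_pi_nhds.1 hL ⟨d, hd⟩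
    rwa [← h.limsup_eq] at h
  refine ⟨g, hg, Q, hQ, hQ.countable_not_continuousAt.mono fun x => mt fun hx => ?_⟩
  exact tendsto_of_monotone_of_dense (fun n => hq (g n)) hD hbot htop hlim hx

end Helly

section Rearrangement

lemma exists_isClosedEmbedding_unitInterval (κ : Type*) [Countable κ] [Infinite κ] :
    ∃ f : (κ → Bool) → unitInterval, IsClosedEmbedding f := by
  obtain ⟨_⟩ := nonempty_denumerable κ
  let h : (κ → Bool) ≃ₜ cantorSet :=
    (Homeomorph.piCongrLeft (Y := fun _ => Bool) (Denumerable.eqv κ)).trans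
      cantorSetHomeomorphNatToBool.symm
  refine ⟨inclusion cantorSet_subset_unitInterval ∘ h, Continuous.isClosedEmbedding ?_ ?_⟩
  · exact (continuous_inclusion _).comp h.continuous
  · exact (inclusion_injective _).comp h.injective

variable {Ω : Type*} [MeasurableSpace Ω] [StandardBorelSpace Ω] {μ : Measure Ω}
  [IsProbabilityMeasure μ] [NullSingletonClass μ]

lemma exists_subseq_rearrangement_tendsto {E : Type*} [TopologicalSpace E] [MeasurableSpace E]
    [BorelSpace E] {f : E → unitInterval} (hf : IsClosedEmbedding f) {X : ℕ → Ω → E}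
    (hX : ∀ n, Measurable (X n)) (hinj : ∀ n, Function.Injective (X n)) :
    ∃ g : ℕ → ℕ, StrictMono g ∧ ∃ e : ℕ → Ω ≃ᵐ unitInterval,
      (∀ n, MeasurePreserving (e n) μ volume) ∧ ∃ Y : unitInterval → E, Measurable Y ∧
        ∀ᵐ x, Tendsto (fun n => X (g n) ((e n).symm x)) atTop (𝓝 (Y x)) := by
  have hfm := hf.measurableEmbedding
  choose φ hφ q hq hqφ using fun n => exists_measurableEquiv_monotone_comp_ae_eq (μ := μ)
    (hfm.measurable.comp (hX n)) (hf.injective.comp (hinj n))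
  obtain ⟨g, hg, Q, hQ, hlim⟩ := exists_subseq_tendsto_of_monotone hq
  have : Nonempty E := (nonempty_of_isProbabilityMeasure μ).map (X 0)
  refine ⟨g, hg, fun n => φ (g n), fun n => hφ (g n), hfm.invFun ∘ Q,
    hfm.measurable_invFun.comp hQ.measurable, ?_⟩
  have hsorted : ∀ᵐ x, ∀ n, q n x = f (X n ((φ n).symm x)) := ae_all_iff.2 fun n => by
    filter_upwards [((hφ n).symm (φ n)).quasiMeasurePreserving.ae (hqφ n)] with x hx
    simpa using hx
  filter_upwards [hsorted, hlim.ae_notMem volume] with x hx hlimx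
  have htendsto : Tendsto (fun n => f (X (g n) ((φ (g n)).symm x))) atTop (𝓝 (Q x)) :=
    (not_not.1 hlimx).congr fun n => hx (g n)
  obtain ⟨y, hy⟩ : Q x ∈ range f :=
    hf.isClosed_range.mem_of_tendsto htendsto (.of_forall fun n => mem_range_self _)
  rw [Function.comp_apply, ← hy, hfm.leftInverse_invFun y]
  rw [← hy] at htendsto
  exact hf.tendsto_nhds_iff.2 htendsto

lemma exists_subseq_rearrangement_eventually_mem_iff {κ : Type*} [Countable κ]
    {A : ℕ → κ → Set Ω} (hA : ∀ n j, MeasurableSet (A n j)) :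
    ∃ g : ℕ → ℕ, StrictMono g ∧ ∃ e : ℕ → Ω ≃ᵐ unitInterval,
      (∀ n, MeasurePreserving (e n) μ volume) ∧ ∃ B : κ → Set unitInterval,
        (∀ j, MeasurableSet (B j)) ∧
        ∀ᵐ x, ∀ j, ∀ᶠ n in atTop, ((e n).symm x ∈ A (g n) j ↔ x ∈ B j) := by
  classical
  -- The coordinates `ℕ` separate the points of `Ω`, so that the code is injective.
  let X (n : ℕ) (x : Ω) : κ ⊕ ℕ → Bool :=
    Sum.elim (fun j => decide (x ∈ A n j)) (MeasurableSpace.mapNatBool Ω x)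
  have hX (n : ℕ) : Measurable (X n) := by
    refine measurable_pi_iff.2 (Sum.forall.2 ⟨fun j => ?_, fun m => ?_⟩)
    · exact measurable_to_bool (by simpa [X, preimage] using hA n j)
    · exact measurable_pi_iff.1 (MeasurableSpace.measurable_mapNatBool Ω) m
  have hinj (n : ℕ) : Function.Injective (X n) := fun x y hxy =>
    MeasurableSpace.injective_mapNatBool Ω (funext fun m => congrFun hxy (Sum.inr m))
  obtain ⟨f, hf⟩ := exists_isClosedEmbedding_unitInterval (κ ⊕ ℕ)
  obtain ⟨g, hg, e, he, Y, hY, hlim⟩ := exists_subseq_rearrangement_tendsto (μ := μ) hf hX hinj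
  refine ⟨g, hg, e, he, fun j => {x | Y x (Sum.inl j) = true}, fun j => ?_, ?_⟩
  · exact measurable_pi_iff.1 hY (Sum.inl j) (measurableSet_singleton true)
  · filter_upwards [hlim] with x hx j
    have hj := tendsto_pi_nhds.1 hx (Sum.inl j)
    rw [nhds_discrete, tendsto_pure] at hj
    filter_upwards [hj] with n hn
    simp [← hn, X]

end Rearrangement

section Greedy

variable {H : Type*} [NormedAddCommGroup H] [InnerProductSpace ℝ H]

lemma norm_sub_inner_smul_sq_le {v : H} (hv : ‖v‖ ≤ 1) (f : H) :
    ‖f - inner ℝ v f • v‖ ^ 2 ≤ ‖f‖ ^ 2 - inner ℝ v f ^ 2 := by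
  rw [norm_sub_sq_real, real_inner_smul_right, real_inner_comm, norm_smul, mul_pow,
    Real.norm_eq_abs, sq_abs]
  nlinarith [sq_nonneg (inner ℝ v f), pow_le_one₀ (n := 2) (norm_nonneg v) hv]

/-- As long as some `v ∈ 𝒞` has `|⟪v, f⟫| > ε`, subtracting `⟪v, f⟫ • v` from `f` decreases
`‖f‖ ^ 2` by at least `ε ^ 2`. -/
lemma exists_sum_smul_abs_inner_sub_le {𝒞 : Set H} (hne : 𝒞.Nonempty) (h𝒞 : ∀ v ∈ 𝒞, ‖v‖ ≤ 1)
    {ε : ℝ} (hε : 0 ≤ ε) (r : ℕ) {f : H} (hf : ‖f‖ ^ 2 ≤ r * ε ^ 2) :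
    ∃ (c : Fin r → ℝ) (v : Fin r → H), (∀ j, |c j| ≤ ‖f‖) ∧ (∀ j, v j ∈ 𝒞) ∧
      ∀ w ∈ 𝒞, |inner ℝ w (f - ∑ j, c j • v j)| ≤ ε := by
  induction r generalizing f with
  | zero =>
    have hf0 : f = 0 := by simpa using hf
    exact ⟨Fin.elim0, Fin.elim0, Fin.rec0, Fin.rec0, by simp [hf0, hε]⟩
  | succ r ih =>
    by_cases! hsmall : ∀ w ∈ 𝒞, |inner ℝ w f| ≤ ε
    · obtain ⟨v, hv⟩ := hne
      exact ⟨fun _ => 0, fun _ => v, by simp, fun _ => hv, by simpa using hsmall⟩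
    obtain ⟨v, hv, hεv⟩ := hsmall
    have hdecr := norm_sub_inner_smul_sq_le (h𝒞 v hv) f
    have hle : ‖f - inner ℝ v f • v‖ ≤ ‖f‖ :=
      le_of_sq_le_sq (by linarith [sq_nonneg (inner ℝ v f)]) (norm_nonneg f)
    have hcoeff : |inner ℝ v f| ≤ ‖f‖ :=
      abs_le_of_sq_le_sq (by linarith [sq_nonneg ‖f - inner ℝ v f • v‖]) (norm_nonneg f)
    have hεsq : ε ^ 2 ≤ inner ℝ v f ^ 2 := by
      rw [← sq_abs (inner ℝ v f)]
      gcongr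
    obtain ⟨c, u, hc, hu, happrox⟩ := ih (f := f - inner ℝ v f • v) (by push_cast at hf; linarith)
    refine ⟨Fin.cons (inner ℝ v f) c, Fin.cons v u, Fin.cases hcoeff fun j => (hc j).trans hle,
      Fin.cases hv hu, fun w hw => ?_⟩
    simpa [Fin.sum_univ_succ, sub_sub] using happrox w hw

end Greedy

section CutNorm

variable {α β : Type*} [MeasurableSpace α] [MeasurableSpace β] {μ : Measure α} {ν : Measure β}

/-- `CutNormLE μ f ε` says that the cut norm `sup_{S, T} |∫_{S × T} f|` of the kernel `f` is at
most `ε`; phrasing the bound as a predicate avoids the junk value of an unbounded supremum. -/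
def CutNormLE (μ : Measure α) (f : α × α → ℝ) (ε : ℝ) : Prop :=
  ∀ S T, MeasurableSet S → MeasurableSet T → |∫ p in S ×ˢ T, f p ∂μ.prod μ| ≤ ε

lemma CutNormLE.add {f g : α × α → ℝ} {ε δ : ℝ} (hf : CutNormLE μ f ε) (hg : CutNormLE μ g δ)
    (hfi : Integrable f (μ.prod μ)) (hgi : Integrable g (μ.prod μ)) :
    CutNormLE μ (f + g) (ε + δ) := fun S T hS hT => by
  rw [integral_add' hfi.integrableOn hgi.integrableOn]
  exact (abs_add_le _ _).trans (add_le_add (hf S T hS hT) (hg S T hS hT))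

lemma CutNormLE.sub_comm {f g : α × α → ℝ} {ε : ℝ} (h : CutNormLE μ (f - g) ε) :
    CutNormLE μ (g - f) ε := fun S T hS hT => by
  have hST := h S T hS hT
  rwa [← neg_sub, integral_neg', abs_neg]

lemma cutNormLE_integral_abs {f : α × α → ℝ} (hf : Integrable f (μ.prod μ)) :
    CutNormLE μ f (∫ p, |f p| ∂μ.prod μ) := fun _ _ _ _ =>
  abs_integral_le_integral_abs.trans
    (setIntegral_le_integral hf.abs (.of_forall fun p => abs_nonneg (f p)))

lemma CutNormLE.comp_measurePreserving [SFinite μ] [SFinite ν] {e : β ≃ᵐ α}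
    (he : MeasurePreserving e ν μ) {f : α × α → ℝ} {ε : ℝ} (hf : CutNormLE μ f ε) :
    CutNormLE ν (f ∘ Prod.map e e) ε := fun S T hS hT => by
  have hpre : S ×ˢ T = Prod.map e e ⁻¹' ((e.symm ⁻¹' S) ×ˢ (e.symm ⁻¹' T)) := by
    ext p
    simp
  rw [hpre]
  exact ((he.prod he).setIntegral_preimage_emb (e.prodCongr e).measurableEmbedding f _).symm ▸
    hf _ _ (e.symm.measurable hS) (e.symm.measurable hT)

/-- A sequence of kernels is `CutCauchy` if it is a Cauchy sequence for the cut norm. -/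
def CutCauchy (μ : Measure α) (f : ℕ → α × α → ℝ) : Prop :=
  ∀ ε > 0, ∃ N, ∀ m ≥ N, ∀ n ≥ N, CutNormLE μ (f m - f n) ε

lemma cutCauchy_of_tendsto_integral_abs_sub {f : ℕ → α × α → ℝ} {w : α × α → ℝ}
    (hf : ∀ n, Integrable (f n) (μ.prod μ)) (hw : Integrable w (μ.prod μ))
    (hlim : Tendsto (fun n => ∫ p, |f n p - w p| ∂μ.prod μ) atTop (𝓝 0)) : CutCauchy μ f := by
  intro ε hε
  obtain ⟨N, hN⟩ := eventually_atTop.1 (hlim.eventually (gt_mem_nhds (half_pos hε)))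
  have hle (n : ℕ) (hn : n ≥ N) : CutNormLE μ (f n - w) (ε / 2) := fun S T hS hT =>
    (cutNormLE_integral_abs ((hf n).sub hw) S T hS hT).trans (hN n hn).le
  refine ⟨N, fun m hm n hn => ?_⟩
  simpa using (hle m hm).add (hle n hn).sub_comm ((hf m).sub hw) (hw.sub (hf n))

lemma cutCauchy_of_forall_cutNormLE_sub {f : ℕ → α × α → ℝ}
    (hf : ∀ n, Integrable (f n) (μ.prod μ))
    (happrox : ∀ ε > 0, ∃ u : ℕ → α × α → ℝ, (∀ n, Integrable (u n) (μ.prod μ)) ∧ CutCauchy μ u ∧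
      ∀ n, CutNormLE μ (f n - u n) ε) : CutCauchy μ f := by
  intro ε hε
  obtain ⟨u, hu, hucauchy, hfu⟩ := happrox (ε / 3) (by positivity)
  obtain ⟨N, hN⟩ := hucauchy (ε / 3) (by positivity)
  refine ⟨N, fun m hm n hn => ?_⟩
  have hmn : CutNormLE μ (f m - u n) (ε / 3 + ε / 3) := by
    simpa using (hfu m).add (hN m hm n hn) ((hf m).sub (hu m)) ((hu m).sub (hu n))
  simpa [add_thirds] using hmn.add (hfu n).sub_comm ((hf m).sub (hu n)) ((hu n).sub (hf n))

end CutNorm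

section StepKernel

variable {α β ι : Type*} [Fintype ι]

/-- The step kernel `∑ j, c j • 1_{S j × T j}`. -/
def stepKernel (c : ι → ℝ) (S T : ι → Set α) (p : α × α) : ℝ :=
  ∑ j, c j * (S j ×ˢ T j).indicator 1 p

lemma stepKernel_comp_prodMap (c : ι → ℝ) (S T : ι → Set α) (e : β → α) :
    stepKernel c S T ∘ Prod.map e e = stepKernel c (fun j => e ⁻¹' S j) fun j => e ⁻¹' T j :=
  rfl

lemma abs_stepKernel_le (c : ι → ℝ) (S T : ι → Set α) (p : α × α) :
    |stepKernel c S T p| ≤ ∑ j, |c j| := by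
  refine (Finset.abs_sum_le_sum_abs _ _).trans (Finset.sum_le_sum fun j _ => ?_)
  rw [abs_mul]
  refine mul_le_of_le_one_right (abs_nonneg _) ?_
  exact (norm_indicator_le_norm_self (1 : α × α → ℝ) p).trans norm_one.le

lemma tendsto_stepKernel {γ : Type*} {l : Filter γ} {c : γ → ι → ℝ} {S T : γ → ι → Set α}
    {c' : ι → ℝ} {S' T' : ι → Set α} {p : α × α} (hc : ∀ j, Tendsto (c · j) l (𝓝 (c' j)))
    (hS : ∀ j, ∀ᶠ n in l, (p.1 ∈ S n j ↔ p.1 ∈ S' j))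
    (hT : ∀ j, ∀ᶠ n in l, (p.2 ∈ T n j ↔ p.2 ∈ T' j)) :
    Tendsto (fun n => stepKernel (c n) (S n) (T n) p) l (𝓝 (stepKernel c' S' T' p)) := by
  classical
  refine tendsto_finsetSum _ fun j _ => (hc j).mul (tendsto_const_nhds.congr' ?_)
  filter_upwards [hS j, hT j] with n hSn hTn
  simp only [indicator_apply, mem_prod, hSn, hTn]

variable [MeasurableSpace α]

lemma measurable_stepKernel {c : ι → ℝ} {S T : ι → Set α} (hS : ∀ j, MeasurableSet (S j))
    (hT : ∀ j, MeasurableSet (T j)) : Measurable (stepKernel c S T) :=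
  Finset.measurable_sum _ fun j _ => (measurable_one.indicator ((hS j).prod (hT j))).const_mul (c j)

lemma integrable_stepKernel {μ : Measure (α × α)} [IsFiniteMeasure μ] {c : ι → ℝ}
    {S T : ι → Set α} (hS : ∀ j, MeasurableSet (S j)) (hT : ∀ j, MeasurableSet (T j)) :
    Integrable (stepKernel c S T) μ :=
  .of_bound (measurable_stepKernel hS hT).aestronglyMeasurable _
    (.of_forall (abs_stepKernel_le c S T))

lemma tendsto_integral_abs_stepKernel_sub {μ : Measure α} [IsFiniteMeasure μ] {C : ℝ}
    {c : ℕ → ι → ℝ} {S T : ℕ → ι → Set α} {c' : ι → ℝ} {S' T' : ι → Set α}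
    (hcC : ∀ n j, |c n j| ≤ C)
    (hS : ∀ n j, MeasurableSet (S n j)) (hT : ∀ n j, MeasurableSet (T n j))
    (hS' : ∀ j, MeasurableSet (S' j)) (hT' : ∀ j, MeasurableSet (T' j))
    (hc : ∀ j, Tendsto (c · j) atTop (𝓝 (c' j)))
    (hSS' : ∀ᵐ x ∂μ, ∀ j, ∀ᶠ n in atTop, (x ∈ S n j ↔ x ∈ S' j))
    (hTT' : ∀ᵐ x ∂μ, ∀ j, ∀ᶠ n in atTop, (x ∈ T n j ↔ x ∈ T' j)) :
    Tendsto (fun n => ∫ p, |stepKernel (c n) (S n) (T n) p - stepKernel c' S' T' p| ∂μ.prod μ)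
      atTop (𝓝 0) := by
  have hlim : ∀ᵐ p ∂μ.prod μ, Tendsto (fun n => |stepKernel (c n) (S n) (T n) p -
      stepKernel c' S' T' p|) atTop (𝓝 0) := by
    filter_upwards [Measure.quasiMeasurePreserving_fst.ae hSS',
      Measure.quasiMeasurePreserving_snd.ae hTT'] with p hp₁ hp₂
    exact tendsto_iff_norm_sub_tendsto_zero.1 (tendsto_stepKernel hc hp₁ hp₂)
  rw [← integral_zero (α × α) ℝ]
  refine tendsto_integral_of_dominated_convergence (fun _ => ∑ _j : ι, C + ∑ j, |c' j|)
    (fun n => ?_) (integrable_const _) (fun n => .of_forall fun p => ?_) hlim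
  · exact ((measurable_stepKernel (hS n) (hT n)).sub
      (measurable_stepKernel hS' hT')).abs.aestronglyMeasurable
  · rw [Real.norm_eq_abs, abs_abs]
    refine (abs_sub _ _).trans (add_le_add ?_ (abs_stepKernel_le _ _ _ p))
    exact (abs_stepKernel_le _ _ _ p).trans (Finset.sum_le_sum fun j _ => hcC n j)

end StepKernel

section Regularity

lemma norm_toLp_le {α E : Type*} [MeasurableSpace α] [NormedAddCommGroup E] {μ : Measure α}
    {p : ENNReal} {f : α → E} {C : ℝ≥0} (hf : MemLp f p μ) (hC : eLpNorm f p μ ≤ C) :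
    ‖hf.toLp f‖ ≤ C := by
  rw [Lp.norm_toLp]
  exact ENNReal.toReal_le_coe_of_le_coe hC

lemma coeFn_sum_smul_indicatorConstLp {α ι : Type*} [MeasurableSpace α] {μ : Measure α}
    [Fintype ι] (p : ENNReal) (c : ι → ℝ) {R : ι → Set α} (hR : ∀ j, MeasurableSet (R j))
    (hμR : ∀ j, μ (R j) ≠ ⊤) :
    ⇑(∑ j, c j • indicatorConstLp p (hR j) (hμR j) (1 : ℝ)) =ᵐ[μ]
      fun x => ∑ j, c j * (R j).indicator 1 x := by
  have hterm : ∀ᵐ x ∂μ, ∀ j, (c j • indicatorConstLp p (hR j) (hμR j) (1 : ℝ)) x =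
      c j * (R j).indicator 1 x := ae_all_iff.2 fun j => by
    filter_upwards [Lp.coeFn_smul (c j) (indicatorConstLp p (hR j) (hμR j) (1 : ℝ)),
      indicatorConstLp_coeFn (p := p) (hs := hR j) (hμs := hμR j) (c := (1 : ℝ))] with x hsmul hx
    rw [hsmul, Pi.smul_apply, hx, smul_eq_mul]
    rfl
  filter_upwards [Lp.coeFn_finsetSum Finset.univ fun j => c j • indicatorConstLp p (hR j) (hμR j)
    (1 : ℝ), hterm] with x hsum hx
  simp only [hsum, Finset.sum_apply, hx]

variable {α : Type*} [MeasurableSpace α] {μ : Measure α} [IsProbabilityMeasure μ]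

lemma exists_cutNormLE_sub_stepKernel {f : α × α → ℝ}
    (hf : AEStronglyMeasurable f (μ.prod μ)) {C : ℝ≥0} (hC : eLpNorm f 2 (μ.prod μ) ≤ C) {ε : ℝ}
    (hε : 0 ≤ ε) {r : ℕ} (hr : C ^ 2 ≤ r * ε ^ 2) :
    ∃ (c : Fin r → ℝ) (S T : Fin r → Set α), (∀ j, |c j| ≤ C) ∧ (∀ j, MeasurableSet (S j)) ∧
      (∀ j, MeasurableSet (T j)) ∧ CutNormLE μ (f - stepKernel c S T) ε := by
  have hf2 : MemLp f 2 (μ.prod μ) := ⟨hf, hC.trans_lt ENNReal.coe_lt_top⟩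
  let rect (R : {S : Set α // MeasurableSet S} × {T : Set α // MeasurableSet T}) :
      Lp ℝ 2 (μ.prod μ) :=
    indicatorConstLp 2 (R.1.2.prod R.2.2) (measure_ne_top _ _) 1
  have hrect : ∀ v ∈ range rect, ‖v‖ ≤ 1 := forall_mem_range.2 fun R => by
    refine norm_indicatorConstLp_le.trans ?_
    rw [norm_one, one_mul]
    exact Real.rpow_le_one measureReal_nonneg measureReal_le_one (by positivity)
  have hnorm := norm_toLp_le hf2 hC
  obtain ⟨c, v, hc, hv, happrox⟩ := exists_sum_smul_abs_inner_sub_le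
    ⟨_, mem_range_self (⟨∅, .empty⟩, ⟨∅, .empty⟩)⟩ hrect hε r
    (hr.trans' (pow_le_pow_left₀ (norm_nonneg _) hnorm 2))
  choose R hR using hv
  obtain rfl : (fun j => rect (R j)) = v := funext hR
  have hsub : ⇑(hf2.toLp f - ∑ j, c j • rect (R j)) =ᵐ[μ.prod μ]
      f - stepKernel c (fun j => (R j).1) fun j => (R j).2 :=
    (Lp.coeFn_sub _ _).trans (hf2.coeFn_toLp.sub (coeFn_sum_smul_indicatorConstLp 2 c _ _))
  refine ⟨c, fun j => (R j).1, fun j => (R j).2, fun j => (hc j).trans hnorm,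
    fun j => (R j).1.2, fun j => (R j).2.2, fun S T hS hT => ?_⟩
  have hST := happrox _ (mem_range_self (⟨S, hS⟩, ⟨T, hT⟩))
  rwa [L2.inner_indicatorConstLp_one, integral_congr_ae (ae_restrict_of_ae hsub)] at hST

end Regularity

section CutCompactness

variable {Ω ι : Type*} [MeasurableSpace Ω] [StandardBorelSpace Ω] {μ : Measure Ω}
  [IsProbabilityMeasure μ] [NullSingletonClass μ] [Countable ι]

lemma exists_subseq_tendsto_of_abs_le {κ : Type*} [Countable κ] {c : ℕ → κ → ℝ} {C : ℝ}
    (hc : ∀ n j, |c n j| ≤ C) :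
    ∃ g : ℕ → ℕ, StrictMono g ∧ ∃ c' : κ → ℝ,
      ∀ j, Tendsto (fun n => c (g n) j) atTop (𝓝 (c' j)) := by
  obtain ⟨c', -, g, hg, hlim⟩ := (isCompact_univ_pi fun _ : κ => isCompact_Icc).tendsto_subseq
    fun n j _ => abs_le.1 (hc n j)
  exact ⟨g, hg, c', tendsto_pi_nhds.1 hlim⟩

lemma exists_subseq_rearrangement_cutCauchy_stepKernel {κ : ι → Type*} [∀ i, Fintype (κ i)]
    {C : ℝ} {c : ℕ → (i : ι) → κ i → ℝ} {S T : ℕ → (i : ι) → κ i → Set Ω}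
    (hc : ∀ n i j, |c n i j| ≤ C) (hS : ∀ n i j, MeasurableSet (S n i j))
    (hT : ∀ n i j, MeasurableSet (T n i j)) :
    ∃ g : ℕ → ℕ, StrictMono g ∧ ∃ e : ℕ → Ω ≃ᵐ unitInterval,
      (∀ n, MeasurePreserving (e n) μ volume) ∧ ∀ i, CutCauchy volume fun n =>
        stepKernel (c (g n) i) (S (g n) i) (T (g n) i) ∘ Prod.map (e n).symm (e n).symm := by
  obtain ⟨g₁, hg₁, c', hc'⟩ := exists_subseq_tendsto_of_abs_le
    (c := fun n (j : Σ i, κ i) => c n j.1 j.2) fun n j => hc n j.1 j.2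
  let A (n : ℕ) : (Σ i, κ i) ⊕ (Σ i, κ i) → Set Ω :=
    Sum.elim (fun j => S (g₁ n) j.1 j.2) fun j => T (g₁ n) j.1 j.2
  have hA (n : ℕ) (j) : MeasurableSet (A n j) := by
    rcases j with j | j
    exacts [hS _ _ _, hT _ _ _]
  obtain ⟨g₂, hg₂, e, he, B, hB, hAB⟩ :=
    exists_subseq_rearrangement_eventually_mem_iff (μ := μ) hA
  refine ⟨g₁ ∘ g₂, hg₁.comp hg₂, e, he, fun i => ?_⟩
  simp only [stepKernel_comp_prodMap]
  have hS' (n j) := (e n).symm.measurable (hS (g₁ (g₂ n)) i j)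
  have hT' (n j) := (e n).symm.measurable (hT (g₁ (g₂ n)) i j)
  refine cutCauchy_of_tendsto_integral_abs_sub (fun n => integrable_stepKernel (hS' n) (hT' n))
    (integrable_stepKernel (fun j => hB (.inl ⟨i, j⟩)) fun j => hB (.inr ⟨i, j⟩))
    (tendsto_integral_abs_stepKernel_sub (fun n j => hc _ i j) hS' hT' (fun j => hB _)
      (fun j => hB _) (fun j => (hc' ⟨i, j⟩).comp hg₂.tendsto_atTop) ?_ ?_)
  · filter_upwards [hAB] with x hx j using hx (.inl ⟨i, j⟩)
  · filter_upwards [hAB] with x hx j using hx (.inr ⟨i, j⟩)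

theorem exists_subseq_rearrangement_cutCauchy {f : ℕ → ι → Ω × Ω → ℝ} {C : ℝ≥0}
    (hf : ∀ n i, AEStronglyMeasurable (f n i) (μ.prod μ))
    (hC : ∀ n i, eLpNorm (f n i) 2 (μ.prod μ) ≤ C) :
    ∃ g : ℕ → ℕ, StrictMono g ∧ ∃ e : ℕ → Ω ≃ᵐ unitInterval,
      (∀ n, MeasurePreserving (e n) μ volume) ∧
        ∀ i, CutCauchy volume fun n => f (g n) i ∘ Prod.map (e n).symm (e n).symm := by
  have hrank (m : ℕ) : ∃ r : ℕ, (C : ℝ) ^ 2 ≤ r * (1 / (m + 1 : ℝ)) ^ 2 := by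
    obtain ⟨r, hr⟩ := exists_nat_ge ((C : ℝ) ^ 2 / (1 / (m + 1 : ℝ)) ^ 2)
    exact ⟨r, (div_le_iff₀ (by positivity)).1 hr⟩
  choose r hr using hrank
  choose c S T hc hS hT happrox using fun n (b : ι × ℕ) =>
    exists_cutNormLE_sub_stepKernel (hf n b.1) (hC n b.1) (by positivity) (hr b.2)
  obtain ⟨g, hg, e, he, hcauchy⟩ :=
    exists_subseq_rearrangement_cutCauchy_stepKernel (μ := μ) hc hS hT
  have hesymm (n : ℕ) : MeasurePreserving (e n).symm volume μ := (he n).symm (e n)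
  have hint (n : ℕ) (i : ι) : Integrable (f n i) (μ.prod μ) :=
    MemLp.integrable one_le_two ⟨hf n i, (hC n i).trans_lt ENNReal.coe_lt_top⟩
  have hcomp {h : Ω × Ω → ℝ} (n : ℕ) (hh : Integrable h (μ.prod μ)) :
      Integrable (h ∘ Prod.map (e n).symm (e n).symm) (volume.prod volume) :=
    ((hesymm n).prod (hesymm n)).integrable_comp_of_integrable hh
  refine ⟨g, hg, e, he, fun i => cutCauchy_of_forall_cutNormLE_sub
    (fun n => hcomp n (hint (g n) i)) fun ε hε => ?_⟩
  obtain ⟨m, hm⟩ := exists_nat_one_div_lt hε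
  refine ⟨_, fun n => hcomp n (integrable_stepKernel (hS _ _) (hT _ _)), hcauchy (i, m),
    fun n A B hA hB => ?_⟩
  exact ((happrox (g n) (i, m)).comp_measurePreserving (hesymm n) A B hA hB).trans hm.le

end CutCompactness

section WeakLimit

lemma exists_tendsto_inner_of_norm_le {𝕜 H ι : Type*} [RCLike 𝕜] [NormedAddCommGroup H]
    [InnerProductSpace 𝕜 H] [CompleteSpace H] (𝒰 : Ultrafilter ι) {v : ι → H} {C : ℝ}
    (hv : ∀ n, ‖v n‖ ≤ C) :
    ∃ w : H, ∀ h, Tendsto (fun n => inner 𝕜 (v n) h) 𝒰 (𝓝 (inner 𝕜 w h)) := by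
  let φ (n : ι) : WeakDual 𝕜 H := StrongDual.toWeakDual (InnerProductSpace.toDual 𝕜 H (v n))
  obtain ⟨L, -, hL⟩ := (WeakDual.isCompact_closedBall (𝕜 := 𝕜) (E := H) 0 C).ultrafilter_le_nhds
    (𝒰.map φ) (le_principal_iff.2 (mem_map.2 (univ_mem' fun n => by simpa [φ] using hv n)))
  refine ⟨(InnerProductSpace.toDual 𝕜 H).symm (WeakDual.toStrongDual L), fun h => ?_⟩
  rw [InnerProductSpace.toDual_symm_apply]
  exact ((WeakDual.eval_continuous h).tendsto L).comp hL

variable {α β γ : Type*} [MeasurableSpace α] [MeasurableSpace β] {μ : Measure α} {ν : Measure β}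
  {l : Filter γ}

/-- Weak convergence of `f n` to `w` along `l`, tested against indicators of measurable sets. -/
def TendstoSetIntegral (μ : Measure α) (f : γ → α → ℝ) (l : Filter γ) (w : α → ℝ) : Prop :=
  ∀ E, MeasurableSet E → Tendsto (fun n => ∫ x in E, f n x ∂μ) l (𝓝 (∫ x in E, w x ∂μ))

lemma exists_tendstoSetIntegral [IsFiniteMeasure μ] {f : γ → α → ℝ} {C : ℝ≥0}
    (𝒰 : Ultrafilter γ) (hf : ∀ n, AEStronglyMeasurable (f n) μ)
    (hC : ∀ n, eLpNorm (f n) 2 μ ≤ C) :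
    ∃ w, Measurable w ∧ Integrable w μ ∧ TendstoSetIntegral μ f 𝒰 w := by
  have hf2 (n : γ) : MemLp (f n) 2 μ := ⟨hf n, (hC n).trans_lt ENNReal.coe_lt_top⟩
  obtain ⟨w, hw⟩ :=
    exists_tendsto_inner_of_norm_le (𝕜 := ℝ) 𝒰 fun n => norm_toLp_le (hf2 n) (hC n)
  refine ⟨w, (Lp.stronglyMeasurable w).measurable, (Lp.memLp w).integrable one_le_two,
    fun E hE => ?_⟩
  have hlim := hw (indicatorConstLp 2 hE (measure_ne_top μ E) 1)
  simp only [← real_inner_comm _ (indicatorConstLp 2 hE (measure_ne_top μ E) (1 : ℝ)),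
    L2.inner_indicatorConstLp_one] at hlim
  exact hlim.congr fun n => integral_congr_ae (ae_restrict_of_ae (hf2 n).coeFn_toLp)

namespace TendstoSetIntegral

lemma ae_eq [l.NeBot] {f : γ → α → ℝ} {w w' : α → ℝ} (h : TendstoSetIntegral μ f l w)
    (h' : TendstoSetIntegral μ f l w') (hw : Integrable w μ) (hw' : Integrable w' μ) :
    w =ᵐ[μ] w' :=
  hw.ae_eq_of_forall_setIntegral_eq _ _ hw' fun E hE _ => tendsto_nhds_unique (h E hE) (h' E hE)

lemma ae_nonneg [l.NeBot] {f : γ → α → ℝ} {w : α → ℝ} (h : TendstoSetIntegral μ f l w)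
    (hw : Integrable w μ) (hf : ∀ n, 0 ≤ᵐ[μ] f n) : 0 ≤ᵐ[μ] w :=
  ae_nonneg_of_forall_setIntegral_nonneg hw fun E hE _ =>
    ge_of_tendsto' (h E hE) fun n => integral_nonneg_of_ae (ae_restrict_of_ae (hf n))

lemma finsetSum {ι : Type*} {s : Finset ι} {f : ι → γ → α → ℝ} {w : ι → α → ℝ}
    (h : ∀ i ∈ s, TendstoSetIntegral μ (f i) l (w i)) (hf : ∀ i ∈ s, ∀ n, Integrable (f i n) μ)
    (hw : ∀ i ∈ s, Integrable (w i) μ) :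
    TendstoSetIntegral μ (fun n x => ∑ i ∈ s, f i n x) l fun x => ∑ i ∈ s, w i x := fun E hE => by
  rw [integral_finsetSum s fun i hi => (hw i hi).integrableOn]
  exact (tendsto_finsetSum s fun i hi => h i hi E hE).congr fun n =>
    (integral_finsetSum s fun i hi => (hf i hi n).integrableOn).symm

lemma comp_measurePreserving {f : γ → α → ℝ} {w : α → ℝ} (h : TendstoSetIntegral μ f l w)
    {e : β ≃ᵐ α} (he : MeasurePreserving e ν μ) :
    TendstoSetIntegral ν (fun n => f n ∘ e) l (w ∘ e) := fun E hE => by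
  have hint (u : α → ℝ) : ∫ x in E, (u ∘ e) x ∂ν = ∫ x in e.symm ⁻¹' E, u x ∂μ := by
    rw [← he.setIntegral_preimage_emb e.measurableEmbedding, ← preimage_comp, e.symm_comp_self,
      preimage_id]
    rfl
  simpa only [hint] using h _ (e.symm.measurable hE)

end TendstoSetIntegral

lemma CutCauchy.eventually_cutNormLE_sub {f : ℕ → α × α → ℝ} {w : α × α → ℝ} {l : Filter ℕ}
    [l.NeBot] (hf : CutCauchy μ f) (hfi : ∀ n, Integrable (f n) (μ.prod μ)) (hl : l ≤ atTop)
    (hw : TendstoSetIntegral (μ.prod μ) f l w) (hwi : Integrable w (μ.prod μ)) {ε : ℝ}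
    (hε : 0 < ε) : ∀ᶠ n in atTop, CutNormLE μ (f n - w) ε := by
  obtain ⟨N, hN⟩ := hf ε hε
  filter_upwards [eventually_ge_atTop N] with n hn S T hS hT
  have hlim : Tendsto (fun m => ∫ p in S ×ˢ T, (f n - f m) p ∂μ.prod μ) l
      (𝓝 (∫ p in S ×ˢ T, (f n - w) p ∂μ.prod μ)) := by
    rw [integral_sub' (hfi n).integrableOn hwi.integrableOn]
    exact ((hw _ (hS.prod hT)).const_sub _).congr fun m =>
      (integral_sub' (hfi n).integrableOn (hfi m).integrableOn).symm
  exact le_of_tendsto hlim.abs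
    (((eventually_ge_atTop N).filter_mono hl).mono fun m hm => hN n hn m hm S T hS hT)

end WeakLimit

section Graphon

variable {k : ℕ}

lemma exists_kGraphon_ae_eq {w : unitInterval × unitInterval → Fin k → ℝ} (hw : Measurable w)
    (hsimplex : ∀ᵐ p, w p ∈ stdSimplex ℝ (Fin k)) (hsymm : ∀ᵐ p, w p.swap = w p) :
    ∃ W : KGraphon k, ∀ᵐ p : unitInterval × unitInterval, W.W p.1 p.2 = w p := by
  classical
  let G : Set (unitInterval × unitInterval) := {p | w p ∈ stdSimplex ℝ (Fin k) ∧ w p.swap = w p}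
  have hG : ∀ᵐ p, p ∈ G := hsimplex.and hsymm
  have hGmeas : MeasurableSet G :=
    ((isClosed_stdSimplex ℝ (Fin k)).measurableSet.preimage hw).inter
      (measurableSet_eq_fun (hw.comp measurable_swap) hw)
  have hGswap (p : unitInterval × unitInterval) (hp : p ∈ G) : p.swap ∈ G :=
    ⟨hp.2.symm ▸ hp.1, by rw [Prod.swap_swap, hp.2]⟩
  obtain ⟨p₀, hp₀⟩ := hG.exists
  let π : unitInterval × unitInterval → unitInterval × unitInterval :=
    G.piecewise id fun _ => p₀
  have hπG (p) : π p ∈ G := by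
    by_cases hp : p ∈ G <;> simp [π, hp, hp₀]
  have hπmeas : Measurable π := measurable_id.piecewise hGmeas measurable_const
  have hπswap (p) : w (π p.swap) = w (π p) := by
    by_cases hp : p ∈ G
    · simpa [π, hp, hGswap p hp] using hp.2
    · have hp' : p.swap ∉ G := fun h => hp (p.swap_swap ▸ hGswap _ h)
      simp [π, hp, hp']
  refine ⟨⟨fun x y => w (π (x, y)), fun x y => hπswap (y, x),
    fun i => (measurable_pi_apply i).comp (hw.comp hπmeas), fun x y i => (hπG (x, y)).1.1 i,
    fun x y => (hπG (x, y)).1.2⟩, ?_⟩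
  filter_upwards [hG] with p hp
  simp [π, hp]

namespace KGraphon

/-- The `i`-th component of a `[k]`-graphon, as a function on the unit square. -/
def kernel (V : KGraphon k) (i : Fin k) (p : unitInterval × unitInterval) : ℝ :=
  V.W p.1 p.2 i

/-- The rearrangement `(x, y) ↦ V (φ x, φ y)` of a `[k]`-graphon. -/
def comap (V : KGraphon k) (φ : unitInterval → unitInterval) (hφ : Measurable φ) :
    KGraphon k where
  W x y := V.W (φ x) (φ y)
  symm x y := V.symm (φ x) (φ y)
  meas i := (V.meas i).comp (hφ.prodMap hφ)
  nonneg x y := V.nonneg (φ x) (φ y)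
  sum_one x y := V.sum_one (φ x) (φ y)

variable (V : KGraphon k) (i : Fin k)

lemma aestronglyMeasurable_kernel : AEStronglyMeasurable (V.kernel i) :=
  (V.meas i).aestronglyMeasurable

lemma abs_kernel_le_one (p : unitInterval × unitInterval) : |V.kernel i p| ≤ 1 := by
  rw [kernel, abs_of_nonneg (V.nonneg _ _ i), ← V.sum_one p.1 p.2]
  exact Finset.single_le_sum (fun j _ => V.nonneg p.1 p.2 j) (Finset.mem_univ i)

lemma integrable_kernel : Integrable (V.kernel i) :=
  .of_bound (V.aestronglyMeasurable_kernel i) 1 (.of_forall (V.abs_kernel_le_one i))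

lemma eLpNorm_kernel_le_one : eLpNorm (V.kernel i) 2 ≤ (1 : ℝ≥0) := by
  simpa using eLpNorm_le_of_ae_bound (p := 2) (μ := volume) (f := V.kernel i) (C := 1)
    (.of_forall (V.abs_kernel_le_one i))

lemma exists_tendstoSetIntegral_kernel {γ : Type*} (𝒰 : Ultrafilter γ) (V : γ → KGraphon k) :
    ∃ W : KGraphon k, ∀ i,
      TendstoSetIntegral volume (fun n => (V n).kernel i) 𝒰 (W.kernel i) := by
  choose w hwmeas hwint hw using fun i => exists_tendstoSetIntegral 𝒰
    (fun n => (V n).aestronglyMeasurable_kernel i) fun n => (V n).eLpNorm_kernel_le_one i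
  have hnonneg : ∀ᵐ p, ∀ i, 0 ≤ w i p :=
    ae_all_iff.2 fun i => (hw i).ae_nonneg (hwint i) fun n =>
      .of_forall fun p => (V n).nonneg p.1 p.2 i
  have hsum : (fun p => ∑ i, w i p) =ᵐ[volume] fun _ => 1 := by
    refine (TendstoSetIntegral.finsetSum (s := Finset.univ) (fun i _ => hw i)
      (fun i _ n => (V n).integrable_kernel i) fun i _ => hwint i).ae_eq (fun E _ => ?_)
      (integrable_finsetSum _ fun i _ => hwint i) (integrable_const 1)
    simp only [kernel, sum_one]
    exact tendsto_const_nhds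
  have hsymm (i : Fin k) : w i ∘ Prod.swap =ᵐ[volume] w i := by
    have hswap : MeasurePreserving (MeasurableEquiv.prodComm : _ ≃ᵐ unitInterval × unitInterval)
        volume volume := Measure.measurePreserving_swap
    refine ((hw i).comp_measurePreserving hswap).ae_eq ?_
      (hswap.integrable_comp_of_integrable (hwint i)) (hwint i)
    have hcomp : (fun n => (V n).kernel i ∘ Prod.swap) = fun n => (V n).kernel i :=
      funext₂ fun n p => congrFun ((V n).symm p.2 p.1) i
    exact hcomp ▸ hw i
  obtain ⟨W, hW⟩ := exists_kGraphon_ae_eq (w := fun p i => w i p) (measurable_pi_lambda _ hwmeas)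
    (by filter_upwards [hnonneg, hsum] with p h0 h1 using ⟨h0, h1⟩)
    (by filter_upwards [ae_all_iff.2 hsymm] with p hp using funext hp)
  refine ⟨W, fun i E hE => ?_⟩
  have hWi : W.kernel i =ᵐ[volume] w i := hW.mono fun p hp => congrFun hp i
  rw [integral_congr_ae (ae_restrict_of_ae hWi)]
  exact hw i E hE

end KGraphon

lemma cutDistK_nonneg (U V : KGraphon k) : 0 ≤ cutDistK U V :=
  Real.iInf_nonneg fun _ => Real.iSup_nonneg fun _ => Real.iSup_nonneg fun _ =>
    Finset.sum_nonneg fun _ _ => abs_nonneg _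

lemma cutDistK_le_sum {U V : KGraphon k} {e : unitInterval ≃ᵐ unitInterval}
    (he : MeasurePreserving e volume volume) {ε : Fin k → ℝ}
    (h : ∀ i, CutNormLE volume ((U.comap e.symm e.symm.measurable).kernel i - V.kernel i) (ε i)) :
    cutDistK U V ≤ ∑ i, ε i := by
  refine (ciInf_le ⟨0, ?_⟩ ⟨e, he, e.bijective⟩).trans
    (ciSup_le fun S => ciSup_le fun T => Finset.sum_le_sum fun i _ => ?_)
  · rintro _ ⟨φ, rfl⟩
    exact Real.iSup_nonneg fun _ => Real.iSup_nonneg fun _ =>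
      Finset.sum_nonneg fun _ _ => abs_nonneg _
  · have hST := (h i).comp_measurePreserving he S.1 T.1 S.2 T.2
    simpa [KGraphon.kernel, KGraphon.comap, Measure.volume_eq_prod] using hST

lemma tendsto_cutDistK_of_eventually_cutNormLE {U : ℕ → KGraphon k} {V : KGraphon k}
    {e : ℕ → unitInterval ≃ᵐ unitInterval} (he : ∀ n, MeasurePreserving (e n) volume volume)
    (h : ∀ i, ∀ ε > 0, ∀ᶠ n in atTop, CutNormLE volume
      (((U n).comap (e n).symm (e n).symm.measurable).kernel i - V.kernel i) ε) :
    Tendsto (fun n => cutDistK (U n) V) atTop (𝓝 0) := by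
  refine tendsto_order.2 ⟨fun a ha => .of_forall fun n => ha.trans_le (cutDistK_nonneg _ _),
    fun ε hε => ?_⟩
  have hpos : 0 < ε / (k + 1) := by positivity
  filter_upwards [eventually_all.2 fun i => h i _ hpos] with n hn
  calc cutDistK (U n) V ≤ ∑ _ : Fin k, ε / (k + 1) := cutDistK_le_sum (he n) hn
    _ = k * (ε / (k + 1)) := by simp
    _ < (k + 1) * (ε / (k + 1)) := by gcongr; exact lt_add_one _
    _ = ε := by field_simp

end Graphon

/-- **Theorem (compactness of the space of `[k]`-graphons).**
Every sequence of `[k]`-graphons has a subsequence converging in cut distance to some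
`[k]`-graphon. -/
theorem kGraphon_compactness (k : ℕ) (hk : 2 ≤ k) (Wseq : ℕ → KGraphon k) :
    ∃ g : ℕ → ℕ, StrictMono g ∧ ∃ W : KGraphon k,
      Tendsto (fun j => cutDistK (Wseq (g j)) W) atTop (nhds 0) := by
  obtain ⟨g, hg, e, he, hcauchy⟩ := exists_subseq_rearrangement_cutCauchy
    (μ := (volume : Measure unitInterval)) (fun n i => (Wseq n).aestronglyMeasurable_kernel i)
    fun n i => (Wseq n).eLpNorm_kernel_le_one i
  let V (n : ℕ) : KGraphon k := (Wseq (g n)).comap (e n).symm (e n).symm.measurable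
  obtain ⟨W, hW⟩ := KGraphon.exists_tendstoSetIntegral_kernel (hyperfilter ℕ) V
  refine ⟨g, hg, W, tendsto_cutDistK_of_eventually_cutNormLE he fun i ε hε => ?_⟩
  exact (hcauchy i).eventually_cutNormLE_sub (fun n => (V n).integrable_kernel i)
    Nat.hyperfilter_le_atTop (hW i) (W.integrable_kernel i) hε

end
end

section
/- Let k ≥ 2 and let P be a hereditary property of [k]-decorated graphs with P_n ≠ ∅ for every n ∈ ℕ, and let ε > 0 be fixed. Then the limit π(P) := lim_{n→∞} ex(n, P_n)/binom(n,2) exists, and there exists n₀ ∈ ℕ such that for all n ≥ n₀, k^{π(P)·binom(n,2)} ≤ |P_n| ≤ k^{(π(P)+ε)·binom(n,2)}. -/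
open MeasureTheory Filter Set

noncomputable section

/-- The edge set of the complete graph `K_n`, encoded as ordered pairs `(i,j)` with
`i < j`. -/
def EdgeType (n : ℕ) : Type := {p : Fin n × Fin n // p.1 < p.2}

instance (n : ℕ) : Fintype (EdgeType n) := Subtype.fintype _
instance (n : ℕ) : DecidableEq (EdgeType n) := Subtype.instDecidableEq

/-- The edge `{i,j}` for distinct `i j`. -/
def edgeOf {n : ℕ} (i j : Fin n) (h : i ≠ j) : EdgeType n :=
  if hij : i < j then ⟨(i, j), hij⟩ else ⟨(j, i), (not_lt.mp hij).lt_of_ne' h⟩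

/-- The `[k]`-decorated graph induced from `c` by an injection `ψ : [N] → [n]`. -/
def inducedCol {k N n : ℕ} (ψ : Fin N → Fin n) (hψ : Function.Injective ψ)
    (c : EdgeType n → Fin k) : EdgeType N → Fin k :=
  fun e => c (edgeOf (ψ e.val.1) (ψ e.val.2) fun h => (ne_of_lt e.prop) (hψ h))

/-- A hereditary property of `[k]`-decorated graphs. -/
def HereditaryK (k : ℕ) (P : ∀ n, Set (EdgeType n → Fin k)) : Prop :=
  ∀ (N n : ℕ) (ψ : Fin N → Fin n) (hψ : Function.Injective ψ),
    ∀ c ∈ P n, inducedCol ψ hψ c ∈ P N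

/-- The realisations `⟨t⟩` of a `k`-colouring template `t` for `K_n`. -/
def realisations {k n : ℕ} (t : EdgeType n → Finset (Fin k)) :
    Set (EdgeType n → Fin k) :=
  {c | ∀ e, c e ∈ t e}

/-- The entropy `Ent(t) = log_k ∏_e |t(e)|` of a template. -/
def templateEnt {k n : ℕ} (t : EdgeType n → Finset (Fin k)) : ℝ :=
  Real.logb k (∏ e : EdgeType n, ((t e).card : ℝ))

/-- The extremal entropy `ex(n, P_n)`: the maximal entropy of a `k`-colouring
template all of whose realisations lie in `P_n`. -/
def exTemplate {k : ℕ} (P : ∀ n, Set (EdgeType n → Fin k)) (n : ℕ) : ℝ :=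
  sSup {x : ℝ | ∃ t : EdgeType n → Finset (Fin k),
    (∀ e, (t e).Nonempty) ∧ realisations t ⊆ P n ∧ x = templateEnt t}

/-
A uniformly random `c ∈ P_N` is an exchangeable random colouring. Condition on the colours of the
edges meeting a vertex set `U` of bounded size. The energy `𝔼 ∑_r ℙ(c e = r | U)²` of an edge `e`
is monotone in `U` and lies in `[0, 1]`, so by pigeonhole some `U` is such that adding any `n - 2`
further vertices raises it by at most `1 / M`. For `n` vertices outside `U`, the colour of an edge
between them is then nearly independent of the remaining edges between them, given `U`: these all
meet the other `n - 2` vertices. Hence a colouring of `K_n` whose edges all get colours of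
conditional probability at least `η` has positive probability, so it lies in `P_n`, unless the
colours on `U` fall into a set of small probability. In other words the likely colours form a
template for `P_n`, of entropy at most `ex(n, P_n)`. By exchangeability, every edge avoiding `U`
has `log_k` of its number of likely colours at most `ex(n, P_n) / C(n,2)` in mean, up to a small
error. Subadditivity of entropy gives `log_k |P_N| ≤ (ex(n, P_n) / C(n,2) + o(1)) C(N,2)` for each
fixed `n`. As `ex(N, P_N) ≤ log_k |P_N|`, both normalised sequences converge to the infimum of
`ex(n, P_n) / C(n,2)` over `n ≥ 2`.
-/

open scoped BigOperators

section FiberAverage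

variable {α β β' : Type*} [DecidableEq β] [DecidableEq β'] {P : Finset α} {κ : α → β}
  {κ' : α → β'} {f : α → ℝ}

/-- The conditional expectation of `f` given `κ`, for the uniform measure on the finite set `P`:
its value at `a` is the average of `f` over the part of `P` on which `κ` takes the value `κ a`. -/
def fiberAvg (P : Finset α) (κ : α → β) (f : α → ℝ) (a : α) : ℝ :=
  𝔼 b ∈ P with κ b = κ a, f b

lemma fiberAvg_factorsThrough : (fiberAvg P κ f).FactorsThrough κ := fun a b h => by
  simp only [fiberAvg, h]

lemma fiberAvg_nonneg (hf : 0 ≤ f) (a : α) : 0 ≤ fiberAvg P κ f a :=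
  Finset.expect_nonneg fun b _ => hf b

lemma fiberAvg_le_one (hf : f ≤ 1) (a : α) : fiberAvg P κ f a ≤ 1 := by
  obtain hP | hP := (P.filter fun b => κ b = κ a).eq_empty_or_nonempty
  · simp only [fiberAvg, hP, Finset.expect_empty, zero_le_one]
  · exact Finset.expect_le hP fun b _ => hf b

lemma expect_fiberAvg_mul {h : α → ℝ} (hh : h.FactorsThrough κ) :
    𝔼 a ∈ P, fiberAvg P κ f a * h a = 𝔼 a ∈ P, f a * h a := by
  have maps_to : ∀ a ∈ P, κ a ∈ P.image κ := fun a => Finset.mem_image_of_mem κ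
  rw [Finset.expect_eq_sum_div_card, Finset.expect_eq_sum_div_card,
    ← Finset.sum_fiberwise_of_maps_to maps_to, ← Finset.sum_fiberwise_of_maps_to maps_to]
  congr 1
  refine Finset.sum_congr rfl fun y hy => ?_
  obtain ⟨a, -, rfl⟩ := Finset.mem_image.mp hy
  calc ∑ b ∈ P with κ b = κ a, fiberAvg P κ f b * h b
      = ∑ b ∈ P with κ b = κ a, fiberAvg P κ f a * h a := by
        refine Finset.sum_congr rfl fun b hb => ?_
        have hba := (Finset.mem_filter.mp hb).2
        rw [fiberAvg_factorsThrough hba, hh hba]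
    _ = (∑ b ∈ P with κ b = κ a, f b) * h a := by
        rw [Finset.sum_const, ← smul_mul_assoc, fiberAvg, Finset.card_smul_expect]
    _ = ∑ b ∈ P with κ b = κ a, f b * h b := by
        rw [Finset.sum_mul]
        exact Finset.sum_congr rfl fun b hb => by rw [hh (Finset.mem_filter.mp hb).2]

lemma expect_sq_fiberAvg_sub_fiberAvg (hκ : κ.FactorsThrough κ') :
    𝔼 a ∈ P, (fiberAvg P κ' f a - fiberAvg P κ f a) ^ 2 =
      𝔼 a ∈ P, fiberAvg P κ' f a ^ 2 - 𝔼 a ∈ P, fiberAvg P κ f a ^ 2 := by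
  have coarse : (fiberAvg P κ f).FactorsThrough κ' := fun a b h => fiberAvg_factorsThrough (hκ h)
  have cross : 𝔼 a ∈ P, fiberAvg P κ' f a * fiberAvg P κ f a = 𝔼 a ∈ P, fiberAvg P κ f a ^ 2 := by
    simp only [sq, expect_fiberAvg_mul coarse, expect_fiberAvg_mul fiberAvg_factorsThrough]
  calc 𝔼 a ∈ P, (fiberAvg P κ' f a - fiberAvg P κ f a) ^ 2
      = 𝔼 a ∈ P, (fiberAvg P κ' f a ^ 2 - 2 * (fiberAvg P κ' f a * fiberAvg P κ f a)
          + fiberAvg P κ f a ^ 2) := Finset.expect_congr rfl fun a _ => by ring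
    _ = 𝔼 a ∈ P, fiberAvg P κ' f a ^ 2 - 𝔼 a ∈ P, fiberAvg P κ f a ^ 2 := by
        rw [Finset.expect_add_distrib, Finset.expect_sub_distrib, ← Finset.mul_expect, cross]
        ring

lemma expect_abs_le_sqrt_expect_sq (P : Finset α) (f : α → ℝ) :
    𝔼 a ∈ P, |f a| ≤ √(𝔼 a ∈ P, f a ^ 2) := by
  obtain rfl | hP := P.eq_empty_or_nonempty
  · simp only [Finset.expect_empty, Real.sqrt_zero, le_refl]
  · refine Real.le_sqrt_of_sq_le ?_
    simpa only [mul_one, sq_abs, one_pow, Finset.expect_const hP] using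
      Finset.expect_mul_sq_le_sq_mul_sq P (fun a => |f a|) fun _ => 1

end FiberAverage

section Decoupling

variable {α β I : Type*} [DecidableEq β] {P : Finset α} {κ : α → β}

lemma expect_fiberAvg_mul_le_add_abs_sub {β' : Type*} [DecidableEq β'] {κ' : α → β'}
    {f G : α → ℝ} (hG : G.FactorsThrough κ') (hG0 : 0 ≤ G) (hG1 : G ≤ 1) :
    𝔼 a ∈ P, fiberAvg P κ f a * G a ≤
      𝔼 a ∈ P, f a * G a + 𝔼 a ∈ P, |fiberAvg P κ' f a - fiberAvg P κ f a| := by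
  rw [← expect_fiberAvg_mul (f := f) hG, ← Finset.expect_add_distrib]
  refine Finset.expect_le_expect fun a _ => ?_
  have h : (fiberAvg P κ f a - fiberAvg P κ' f a) * G a ≤ |fiberAvg P κ f a - fiberAvg P κ' f a| :=
    (mul_le_mul_of_nonneg_right (le_abs_self _) (hG0 a)).trans
      (mul_le_of_le_one_right (abs_nonneg _) (hG1 a))
  rw [abs_sub_comm]
  linarith

/- The factors are replaced one at a time: while `f i` is being replaced, every other factor,
already replaced or not, is a function of `κ' i`. -/
lemma expect_mul_prod_fiberAvg_le {β' : I → Type*} [∀ i, DecidableEq (β' i)]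
    {κ' : ∀ i, α → β' i} {f : I → α → ℝ} {Δ : ℝ}
    (hκ : ∀ i, κ.FactorsThrough (κ' i)) (hf : ∀ i j, i ≠ j → (f i).FactorsThrough (κ' j))
    (hf0 : ∀ i, 0 ≤ f i) (hf1 : ∀ i, f i ≤ 1)
    (hΔ : ∀ i, 𝔼 a ∈ P, |fiberAvg P (κ' i) (f i) a - fiberAvg P κ (f i) a| ≤ Δ)
    (s : Finset I) {H : α → ℝ} (hH : H.FactorsThrough κ) (hH0 : 0 ≤ H) (hH1 : H ≤ 1) :
    𝔼 a ∈ P, H a * ∏ i ∈ s, fiberAvg P κ (f i) a ≤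
      𝔼 a ∈ P, H a * ∏ i ∈ s, f i a + s.card * Δ := by
  classical
  induction s using Finset.induction_on generalizing H with
  | empty => simp
  | insert i s hi ih =>
    set H' : α → ℝ := fun a => H a * fiberAvg P κ (f i) a with hH'
    set G : α → ℝ := fun a => H a * ∏ j ∈ s, f j a with hG
    have prod_nonneg (a : α) : 0 ≤ ∏ j ∈ s, f j a := Finset.prod_nonneg fun j _ => hf0 j a
    have prod_le_one (a : α) : ∏ j ∈ s, f j a ≤ 1 :=
      Finset.prod_le_one (fun j _ => hf0 j a) fun j _ => hf1 j a
    have replace_rest := ih (H := H')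
      (fun a b h => by simp only [hH', hH h, fiberAvg_factorsThrough h])
      (fun a => mul_nonneg (hH0 a) (fiberAvg_nonneg (hf0 i) a))
      (fun a => mul_le_one₀ (hH1 a) (fiberAvg_nonneg (hf0 i) a) (fiberAvg_le_one (hf1 i) a))
    have replace_i := (expect_fiberAvg_mul_le_add_abs_sub (P := P) (κ := κ) (κ' := κ' i) (f := f i)
      (G := G)
      (fun a b h => by
        simp only [hG, hH (hκ i h)]
        congr 1
        exact Finset.prod_congr rfl fun j hj => hf j i (ne_of_mem_of_not_mem hj hi) h)
      (fun a => mul_nonneg (hH0 a) (prod_nonneg a))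
      (fun a => mul_le_one₀ (hH1 a) (prod_nonneg a) (prod_le_one a))).trans
      (add_le_add_right (hΔ i) _)
    calc 𝔼 a ∈ P, H a * ∏ j ∈ insert i s, fiberAvg P κ (f j) a
        = 𝔼 a ∈ P, H' a * ∏ j ∈ s, fiberAvg P κ (f j) a :=
          Finset.expect_congr rfl fun a _ => by rw [Finset.prod_insert hi, mul_assoc]
      _ ≤ 𝔼 a ∈ P, fiberAvg P κ (f i) a * G a + s.card * Δ :=
          replace_rest.trans_eq <| by
            congr 1
            exact Finset.expect_congr rfl fun a _ => by simp only [hH', hG]; ring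
      _ ≤ 𝔼 a ∈ P, f i a * G a + Δ + s.card * Δ := by gcongr
      _ = 𝔼 a ∈ P, H a * ∏ j ∈ insert i s, f j a + (insert i s).card * Δ := by
          rw [Finset.card_insert_of_notMem hi]
          push_cast
          rw [add_assoc, add_one_mul, add_comm Δ]
          congr 1
          exact Finset.expect_congr rfl fun a _ => by
            simp only [hG, Finset.prod_insert hi]; ring

end Decoupling

section Entropy

lemma negMulLog_add_self_le_two_mul_sqrt {x : ℝ} (hx : 0 ≤ x) :
    Real.negMulLog x + x ≤ 2 * √x := by
  have hsq : √x * √x = x := Real.mul_self_sqrt hx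
  have hsplit : Real.negMulLog x = 2 * (√x * Real.negMulLog √x) := by
    rw [← hsq, Real.negMulLog_mul, hsq]
    ring
  have hbound : √x * Real.negMulLog √x ≤ √x * (1 - √x) :=
    mul_le_mul_of_nonneg_left (Real.negMulLog_le_one_sub_self (Real.sqrt_nonneg x))
      (Real.sqrt_nonneg x)
  rw [mul_sub, mul_one, hsq] at hbound
  linarith

variable {K : Type*} {p : K → ℝ}

lemma sum_negMulLog_add_sum_le {T : Finset K} (hp : ∀ r ∈ T, 0 ≤ p r)
    (hpT : ∑ r ∈ T, p r ≤ 1) :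
    ∑ r ∈ T, Real.negMulLog (p r) + ∑ r ∈ T, p r ≤ Real.log T.card + 1 := by
  obtain rfl | hT := T.eq_empty_or_nonempty
  · simp
  have hcard : (0 : ℝ) < T.card := Nat.cast_pos.mpr hT.card_pos
  have pointwise : ∀ r ∈ T,
      Real.negMulLog (p r) + p r ≤ p r * Real.log T.card + (T.card : ℝ)⁻¹ := by
    intro r hr
    calc Real.negMulLog (p r) + p r
        = p r * Real.log T.card
            + (T.card : ℝ)⁻¹ * Real.negMulLog (T.card * p r) + p r := by
          conv_lhs => rw [← inv_mul_cancel_left₀ hcard.ne' (p r), Real.negMulLog_mul]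
          rw [Real.negMulLog, Real.log_inv]
          field_simp
      _ ≤ p r * Real.log T.card + (T.card : ℝ)⁻¹ * (1 - T.card * p r) + p r := by
          gcongr
          exact Real.negMulLog_le_one_sub_self (mul_nonneg hcard.le (hp r hr))
      _ = p r * Real.log T.card + (T.card : ℝ)⁻¹ := by
          field_simp
          ring
  calc ∑ r ∈ T, Real.negMulLog (p r) + ∑ r ∈ T, p r
      = ∑ r ∈ T, (Real.negMulLog (p r) + p r) := Finset.sum_add_distrib.symm
    _ ≤ ∑ r ∈ T, (p r * Real.log T.card + (T.card : ℝ)⁻¹) := Finset.sum_le_sum pointwise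
    _ = (∑ r ∈ T, p r) * Real.log T.card + 1 := by
        rw [Finset.sum_add_distrib, ← Finset.sum_mul, Finset.sum_const, nsmul_eq_mul,
          mul_inv_cancel₀ hcard.ne']
    _ ≤ Real.log T.card + 1 := by
        gcongr
        exact mul_le_of_le_one_left (Real.log_natCast_nonneg _) hpT

lemma sum_negMulLog_le_log_card_add [Fintype K] (hp : ∀ r, 0 ≤ p r) (hp1 : ∑ r, p r = 1)
    (η : ℝ) :
    ∑ r, Real.negMulLog (p r) ≤
      Real.log (Finset.univ.filter fun r => η ≤ p r).card + 2 * Fintype.card K * √η := by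
  have large := sum_negMulLog_add_sum_le (T := Finset.univ.filter fun r => η ≤ p r)
    (fun r _ => hp r) (hp1 ▸ Finset.sum_le_univ_sum_of_nonneg hp)
  have small : ∑ r with ¬ η ≤ p r, (Real.negMulLog (p r) + p r) ≤ 2 * Fintype.card K * √η := by
    calc ∑ r with ¬ η ≤ p r, (Real.negMulLog (p r) + p r)
        ≤ ∑ r with ¬ η ≤ p r, 2 * √η := Finset.sum_le_sum fun r hr =>
          (negMulLog_add_self_le_two_mul_sqrt (hp r)).trans <| by
            gcongr
            exact (not_le.mp (Finset.mem_filter.mp hr).2).le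
      _ ≤ ∑ _r : K, 2 * √η :=
          Finset.sum_le_univ_sum_of_nonneg fun _ => by positivity
      _ = 2 * Fintype.card K * √η := by
          rw [Finset.sum_const, Finset.card_univ, nsmul_eq_mul]
          ring
  have split_entropy := Finset.sum_filter_add_sum_filter_not Finset.univ (fun r => η ≤ p r)
    fun r => Real.negMulLog (p r)
  have split_mass := Finset.sum_filter_add_sum_filter_not Finset.univ (fun r => η ≤ p r) p
  rw [Finset.sum_add_distrib] at small
  linarith

lemma log_card_le_log_add_expect_neg_log {α : Type*} {P : Finset α} (hP : P.Nonempty)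
    {Q : α → ℝ} (hQ : ∀ a ∈ P, 0 < Q a) {C : ℝ} (hC : ∑ a ∈ P, Q a ≤ C) :
    Real.log P.card ≤ Real.log C + 𝔼 a ∈ P, -Real.log (Q a) := by
  have hcard : (0 : ℝ) < P.card := Nat.cast_pos.mpr hP.card_pos
  have hC0 : 0 < C := (Finset.sum_pos hQ hP).trans_le hC
  have pointwise : ∀ a ∈ P, Real.log P.card ≤
      (Real.log C - 1) + -Real.log (Q a) + P.card / C * Q a := by
    intro a ha
    have h := Real.log_le_sub_one_of_pos (mul_pos (div_pos hcard hC0) (hQ a ha))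
    rw [Real.log_mul (div_pos hcard hC0).ne' (hQ a ha).ne', Real.log_div hcard.ne' hC0.ne'] at h
    linarith
  have mean_le_one : P.card / C * 𝔼 a ∈ P, Q a ≤ 1 := by
    rw [Finset.expect_eq_sum_div_card, div_mul_div_comm, mul_comm, mul_div_mul_right _ _ hcard.ne']
    exact div_le_one_of_le₀ hC hC0.le
  calc Real.log P.card = 𝔼 _a ∈ P, Real.log P.card := (Finset.expect_const hP _).symm
    _ ≤ 𝔼 a ∈ P, ((Real.log C - 1) + -Real.log (Q a) + P.card / C * Q a) :=
        Finset.expect_le_expect pointwise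
    _ = Real.log C - 1 + 𝔼 a ∈ P, -Real.log (Q a) + P.card / C * 𝔼 a ∈ P, Q a := by
        rw [Finset.expect_add_distrib, Finset.expect_add_distrib, Finset.expect_const hP,
          Finset.mul_expect]
    _ ≤ Real.log C + 𝔼 a ∈ P, -Real.log (Q a) := by linarith

end Entropy

section ConditionalLaw

lemma restrict_factorsThrough_restrict {E K : Type*} {A B : Finset E} (hAB : A ⊆ B) :
    (A.restrict : (E → K) → A → K).FactorsThrough (B.restrict : (E → K) → B → K) :=
  fun _ _ h => funext fun e => congrFun h ⟨e, hAB e.2⟩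

variable {E K : Type*} [DecidableEq K] {P : Finset (E → K)} {A B : Finset E} {e : E} {c : E → K}

/-- The indicator function of the colourings that give `e` the colour `r`. -/
def colourIndicator (e : E) (r : K) (c : E → K) : ℝ := if c e = r then 1 else 0

/-- The conditional law of the colour of `e`, given the colours on `A`, in a uniformly random
element of `P`: `condLaw P A e c r` is the proportion of colourings with `e` coloured `r` among
those in `P` that agree with `c` on `A`. -/
def condLaw (P : Finset (E → K)) (A : Finset E) (e : E) (c : E → K) (r : K) : ℝ :=
  fiberAvg P A.restrict (colourIndicator e r) c

lemma colourIndicator_nonneg (e : E) (r : K) : 0 ≤ colourIndicator e r := fun c => by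
  simp only [colourIndicator]
  split_ifs <;> simp

lemma colourIndicator_le_one (e : E) (r : K) : colourIndicator e r ≤ 1 := fun c => by
  simp only [colourIndicator]
  split_ifs <;> simp

lemma colourIndicator_factorsThrough_restrict (he : e ∈ A) (r : K) :
    (colourIndicator e r).FactorsThrough A.restrict := fun c d h => by
  have : c e = d e := congrFun h ⟨e, he⟩
  simp only [colourIndicator, this]

lemma condLaw_factorsThrough : (condLaw P A e).FactorsThrough A.restrict := fun _ _ h =>
  funext fun _ => fiberAvg_factorsThrough h

lemma condLaw_nonneg (r : K) : 0 ≤ condLaw P A e c r :=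
  fiberAvg_nonneg (colourIndicator_nonneg e r) c

lemma condLaw_le_one (r : K) : condLaw P A e c r ≤ 1 :=
  fiberAvg_le_one (colourIndicator_le_one e r) c

lemma sum_condLaw [Fintype K] (hc : c ∈ P) : ∑ r, condLaw P A e c r = 1 := by
  have hfiber : (P.filter fun d => A.restrict d = A.restrict c).Nonempty :=
    ⟨c, Finset.mem_filter.mpr ⟨hc, rfl⟩⟩
  simp only [condLaw, fiberAvg, colourIndicator]
  rw [← Finset.expect_sum_comm]
  simp only [Finset.sum_ite_eq, Finset.mem_univ, if_true, Finset.expect_const hfiber]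

lemma condLaw_apply_self_pos (hc : c ∈ P) : 0 < condLaw P A e c (c e) :=
  Finset.expect_pos' (fun d _ => colourIndicator_nonneg e _ d)
    ⟨c, Finset.mem_filter.mpr ⟨hc, rfl⟩, by simp [colourIndicator]⟩

variable [Fintype K]

/-- The colours of `e` that, given the colours of `c` on `A`, have conditional probability at
least `η`. As `e` varies they form a template. -/
def likelyColours (P : Finset (E → K)) (A : Finset E) (η : ℝ) (e : E) (c : E → K) : Finset K :=
  Finset.univ.filter fun r => η ≤ condLaw P A e c r

lemma mem_likelyColours {η : ℝ} {r : K} :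
    r ∈ likelyColours P A η e c ↔ η ≤ condLaw P A e c r := by
  simp [likelyColours]

lemma likelyColours_nonempty {η : ℝ} (hη : η * Fintype.card K ≤ 1) (hc : c ∈ P) :
    (likelyColours P A η e c).Nonempty := by
  by_contra! hempty
  have hlt : ∀ r, condLaw P A e c r < η := fun r => by
    rw [← not_le, ← mem_likelyColours, hempty]
    exact Finset.notMem_empty r
  have : ∑ r, condLaw P A e c r < ∑ _r : K, η :=
    Finset.sum_lt_sum_of_nonempty ⟨c e, Finset.mem_univ _⟩ fun r _ => hlt r
  rw [sum_condLaw hc, Finset.sum_const, Finset.card_univ, nsmul_eq_mul] at this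
  linarith

lemma expect_neg_log_condLaw (P : Finset (E → K)) (A : Finset E) (e : E) :
    𝔼 c ∈ P, -Real.log (condLaw P A e c (c e)) =
      𝔼 c ∈ P, ∑ r, Real.negMulLog (condLaw P A e c r) := by
  have measurable_log (r : K) :
      (fun c => -Real.log (condLaw P A e c r)).FactorsThrough A.restrict := fun c d h => by
    simp only [condLaw_factorsThrough h]
  calc 𝔼 c ∈ P, -Real.log (condLaw P A e c (c e))
      = ∑ r, 𝔼 c ∈ P, colourIndicator e r c * -Real.log (condLaw P A e c r) := by
        rw [← Finset.expect_sum_comm]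
        exact Finset.expect_congr rfl fun c _ => by simp [colourIndicator]
    _ = ∑ r, 𝔼 c ∈ P, condLaw P A e c r * -Real.log (condLaw P A e c r) :=
        Finset.sum_congr rfl fun r _ => (expect_fiberAvg_mul (measurable_log r)).symm
    _ = 𝔼 c ∈ P, ∑ r, Real.negMulLog (condLaw P A e c r) := by
        rw [← Finset.expect_sum_comm]
        simp only [Real.negMulLog, mul_neg, neg_mul]

variable [Fintype E] [DecidableEq E]

/- Given the colours on `A`, replacing the joint law of the remaining colours by the product of
its marginals yields weights of total mass at most one. -/
lemma sum_prod_condLaw_le (P : Finset (E → K)) (A : Finset E) :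
    ∑ c ∈ P, ∏ e ∈ Aᶜ, condLaw P A e c (c e) ≤ (Fintype.card K : ℝ) ^ A.card := by
  have fiber_le_one : ∀ y : A → K,
      ∑ c ∈ P with A.restrict c = y, ∏ e ∈ Aᶜ, condLaw P A e c (c e) ≤ 1 := by
    intro y
    obtain hempty | ⟨d, hd⟩ := (P.filter fun c => A.restrict c = y).eq_empty_or_nonempty
    · simp only [hempty, Finset.sum_empty, zero_le_one]
    obtain ⟨hdP, rfl⟩ := Finset.mem_filter.mp hd
    set w : E → K → ℝ := fun e r => if e ∈ A then colourIndicator e r d else condLaw P A e d r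
      with hw
    have w_nonneg : ∀ e r, 0 ≤ w e r := fun e r => by
      simp only [hw]
      split_ifs
      exacts [colourIndicator_nonneg e r d, condLaw_nonneg r]
    have sum_w : ∀ e, ∑ r, w e r = 1 := fun e => by
      by_cases he : e ∈ A
      · simp [hw, he, colourIndicator]
      · simp [hw, he, sum_condLaw hdP]
    have prod_w : ∀ c ∈ P.filter (fun c => A.restrict c = A.restrict d),
        ∏ e ∈ Aᶜ, condLaw P A e c (c e) = ∏ e, w e (c e) := fun c hc => by
      have hcd := (Finset.mem_filter.mp hc).2
      have on_A : ∏ e ∈ A, w e (c e) = 1 := Finset.prod_eq_one fun e he => by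
        have : c e = d e := congrFun hcd ⟨e, he⟩
        simp [hw, he, colourIndicator, this]
      rw [← Finset.prod_mul_prod_compl A, on_A, one_mul]
      exact Finset.prod_congr rfl fun e he => by
        simp only [hw, Finset.mem_compl.mp he, if_false, condLaw_factorsThrough hcd]
    calc ∑ c ∈ P with A.restrict c = A.restrict d, ∏ e ∈ Aᶜ, condLaw P A e c (c e)
        = ∑ c ∈ P with A.restrict c = A.restrict d, ∏ e, w e (c e) := Finset.sum_congr rfl prod_w
      _ ≤ ∑ c : E → K, ∏ e, w e (c e) :=
          Finset.sum_le_univ_sum_of_nonneg fun c => Finset.prod_nonneg fun e _ => w_nonneg e _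
      _ = ∏ e, ∑ r, w e r := by rw [Finset.prod_univ_sum, Fintype.piFinset_univ]
      _ = 1 := Finset.prod_eq_one fun e _ => sum_w e
  calc ∑ c ∈ P, ∏ e ∈ Aᶜ, condLaw P A e c (c e)
      = ∑ y : A → K, ∑ c ∈ P with A.restrict c = y, ∏ e ∈ Aᶜ, condLaw P A e c (c e) :=
        (Finset.sum_fiberwise P _ _).symm
    _ ≤ ∑ _y : A → K, (1 : ℝ) := Finset.sum_le_sum fun y _ => fiber_le_one y
    _ = (Fintype.card K : ℝ) ^ A.card := by simp

lemma log_card_le_sum_expect_negMulLog_condLaw (hP : P.Nonempty) (A : Finset E) :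
    Real.log P.card ≤ A.card * Real.log (Fintype.card K) +
      ∑ e ∈ Aᶜ, 𝔼 c ∈ P, ∑ r, Real.negMulLog (condLaw P A e c r) := by
  calc Real.log P.card
      ≤ Real.log ((Fintype.card K : ℝ) ^ A.card) +
          𝔼 c ∈ P, -Real.log (∏ e ∈ Aᶜ, condLaw P A e c (c e)) :=
        log_card_le_log_add_expect_neg_log hP
          (fun c hc => Finset.prod_pos fun e _ => condLaw_apply_self_pos hc)
          (sum_prod_condLaw_le P A)
    _ = A.card * Real.log (Fintype.card K) +
          ∑ e ∈ Aᶜ, 𝔼 c ∈ P, -Real.log (condLaw P A e c (c e)) := by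
        rw [Real.log_pow, ← Finset.expect_sum_comm]
        congr 1
        refine Finset.expect_congr rfl fun c hc => ?_
        rw [Real.log_prod fun e _ => (condLaw_apply_self_pos hc).ne', Finset.sum_neg_distrib]
    _ = _ := by simp only [expect_neg_log_condLaw]

lemma log_card_le_sum_expect_log_card_likelyColours (hP : P.Nonempty) (A : Finset E) (η : ℝ) :
    Real.log P.card ≤ A.card * Real.log (Fintype.card K) +
      ∑ e ∈ Aᶜ, (𝔼 c ∈ P, Real.log (likelyColours P A η e c).card + 2 * Fintype.card K * √η) := by
  refine (log_card_le_sum_expect_negMulLog_condLaw hP A).trans ?_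
  gcongr with e
  rw [← Finset.expect_const hP (2 * Fintype.card K * √η), ← Finset.expect_add_distrib]
  exact Finset.expect_le_expect fun c hc =>
    sum_negMulLog_le_log_card_add condLaw_nonneg (sum_condLaw hc) η

end ConditionalLaw

section Energy

variable {E K I : Type*} [DecidableEq K] [Fintype K] {P : Finset (E → K)} {A : Finset E} {δ : ℝ}

/-- The mean square of the conditional law of the colour of `e` given the colours on `A`. It grows
with `A`, and when it hardly grows neither does the conditional law change much. -/
def energy (P : Finset (E → K)) (A : Finset E) (e : E) : ℝ :=
  𝔼 c ∈ P, ∑ r, condLaw P A e c r ^ 2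

lemma energy_nonneg (P : Finset (E → K)) (A : Finset E) (e : E) : 0 ≤ energy P A e :=
  Finset.expect_nonneg fun _ _ => Finset.sum_nonneg fun _ _ => sq_nonneg _

lemma energy_le_one (P : Finset (E → K)) (A : Finset E) (e : E) : energy P A e ≤ 1 := by
  obtain rfl | hP := P.eq_empty_or_nonempty
  · simp [energy]
  refine Finset.expect_le hP fun c hc => ?_
  rw [← sum_condLaw (A := A) (e := e) hc]
  exact Finset.sum_le_sum fun r _ =>
    pow_le_of_le_one (condLaw_nonneg r) (condLaw_le_one r) two_ne_zero

lemma expect_abs_condLaw_sub_le {B : Finset E} {e : E} (hAB : A ⊆ B)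
    (hδ : energy P B e ≤ energy P A e + δ) (r : K) :
    𝔼 c ∈ P, |condLaw P B e c r - condLaw P A e c r| ≤ √δ := by
  refine (expect_abs_le_sqrt_expect_sq P _).trans (Real.sqrt_le_sqrt ?_)
  calc 𝔼 c ∈ P, (condLaw P B e c r - condLaw P A e c r) ^ 2
      ≤ ∑ r, 𝔼 c ∈ P, (condLaw P B e c r - condLaw P A e c r) ^ 2 :=
        Finset.single_le_sum
          (f := fun r => 𝔼 c ∈ P, (condLaw P B e c r - condLaw P A e c r) ^ 2)
          (fun r _ => Finset.expect_nonneg fun c _ => sq_nonneg _) (Finset.mem_univ r)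
    _ = energy P B e - energy P A e := by
        simp only [energy, Finset.expect_sum_comm, ← Finset.sum_sub_distrib]
        exact Finset.sum_congr rfl fun r _ =>
          expect_sq_fiberAvg_sub_fiberAvg (restrict_factorsThrough_restrict hAB)
    _ ≤ δ := by linarith

variable [Fintype I] {φ : I → E} {B : I → Finset E}

lemma expect_prod_condLaw_le (hAB : ∀ i, A ⊆ B i) (hφ : ∀ i j, i ≠ j → φ i ∈ B j)
    (hδ : ∀ i, energy P (B i) (φ i) ≤ energy P A (φ i) + δ) (ρ : I → K) :
    𝔼 c ∈ P, ∏ i, condLaw P A (φ i) c (ρ i) ≤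
      𝔼 c ∈ P, ∏ i, colourIndicator (φ i) (ρ i) c + Fintype.card I * √δ := by
  have h := expect_mul_prod_fiberAvg_le (P := P) (κ := A.restrict)
    (κ' := fun i => (B i).restrict) (f := fun i => colourIndicator (φ i) (ρ i))
    (fun i => restrict_factorsThrough_restrict (hAB i))
    (fun i j hij => colourIndicator_factorsThrough_restrict (hφ i j hij) _)
    (fun i => colourIndicator_nonneg _ _) (fun i => colourIndicator_le_one _ _)
    (fun i => expect_abs_condLaw_sub_le (hAB i) (hδ i) (ρ i)) Finset.univ (H := 1)
    (fun _ _ _ => rfl) zero_le_one le_rfl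
  simpa only [condLaw, Pi.one_apply, one_mul, Finset.card_univ] using h

lemma expect_indicator_forall_mem_likelyColours_le (hAB : ∀ i, A ⊆ B i)
    (hφ : ∀ i j, i ≠ j → φ i ∈ B j)
    (hδ : ∀ i, energy P (B i) (φ i) ≤ energy P A (φ i) + δ) {η : ℝ} (hη : 0 < η)
    {ρ : I → K} (hρ : ∀ c ∈ P, c ∘ φ ≠ ρ) :
    𝔼 c ∈ P, {c | ∀ i, ρ i ∈ likelyColours P A η (φ i) c}.indicator 1 c ≤
      Fintype.card I * √δ / η ^ Fintype.card I := by
  have unrealised : 𝔼 c ∈ P, ∏ i, colourIndicator (φ i) (ρ i) c = 0 :=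
    Finset.expect_eq_zero fun c hc => by
      obtain ⟨i, hi⟩ := Function.ne_iff.mp (hρ c hc)
      exact Finset.prod_eq_zero (Finset.mem_univ i) (if_neg hi)
  have markov : ∀ c ∈ P, {c | ∀ i, ρ i ∈ likelyColours P A η (φ i) c}.indicator 1 c *
      η ^ Fintype.card I ≤ ∏ i, condLaw P A (φ i) c (ρ i) := by
    intro c _
    by_cases hc : c ∈ {c | ∀ i, ρ i ∈ likelyColours P A η (φ i) c}
    · rw [indicator_of_mem hc, Pi.one_apply, one_mul, ← Finset.card_univ, ← Finset.prod_const]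
      exact Finset.prod_le_prod (fun _ _ => hη.le) fun i _ => mem_likelyColours.mp (hc i)
    · rw [indicator_of_notMem hc, zero_mul]
      exact Finset.prod_nonneg fun i _ => condLaw_nonneg _
  rw [le_div_iff₀ (by positivity), Finset.expect_mul]
  calc _ ≤ 𝔼 c ∈ P, ∏ i, condLaw P A (φ i) c (ρ i) := Finset.expect_le_expect markov
    _ ≤ Fintype.card I * √δ := by
      simpa only [unrealised, zero_add] using expect_prod_condLaw_le hAB hφ hδ ρ

lemma expect_indicator_exists_notMem_likelyColours_le (hAB : ∀ i, A ⊆ B i)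
    (hφ : ∀ i j, i ≠ j → φ i ∈ B j)
    (hδ : ∀ i, energy P (B i) (φ i) ≤ energy P A (φ i) + δ) {η : ℝ} (hη : 0 < η)
    {S : Set (I → K)} (hS : ∀ c ∈ P, c ∘ φ ∈ S) :
    𝔼 c ∈ P, {c | ∃ ρ ∉ S, ∀ i, ρ i ∈ likelyColours P A η (φ i) c}.indicator 1 c ≤
      (Fintype.card K : ℝ) ^ Fintype.card I * (Fintype.card I * √δ / η ^ Fintype.card I) := by
  classical
  let allLikely (ρ : I → K) : Set (E → K) := {c | ∀ i, ρ i ∈ likelyColours P A η (φ i) c}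
  have indicator_allLikely_nonneg (c : E → K) (ρ : I → K) :
      (0 : ℝ) ≤ (allLikely ρ).indicator 1 c := indicator_nonneg (fun _ _ => zero_le_one) c
  have union_bound (c : E → K) :
      {c | ∃ ρ ∉ S, c ∈ allLikely ρ}.indicator (1 : (E → K) → ℝ) c ≤
        ∑ ρ with ρ ∉ S, (allLikely ρ).indicator 1 c := by
    refine indicator_apply_le' (fun hc => ?_)
      fun _ => Finset.sum_nonneg fun ρ _ => indicator_allLikely_nonneg c ρ
    obtain ⟨ρ, hρS, hρ⟩ := hc
    rw [← indicator_of_mem hρ (1 : (E → K) → ℝ)]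
    exact Finset.single_le_sum (f := fun ρ => (allLikely ρ).indicator (1 : (E → K) → ℝ) c)
      (fun ρ _ => indicator_allLikely_nonneg c ρ)
      (Finset.mem_filter.mpr ⟨Finset.mem_univ ρ, hρS⟩)
  calc _ ≤ ∑ ρ with ρ ∉ S, 𝔼 c ∈ P, (allLikely ρ).indicator (1 : (E → K) → ℝ) c := by
        rw [← Finset.expect_sum_comm]
        exact Finset.expect_le_expect fun c _ => union_bound c
    _ ≤ ∑ ρ : I → K with ρ ∉ S, Fintype.card I * √δ / η ^ Fintype.card I :=
        Finset.sum_le_sum fun ρ hρ =>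
          expect_indicator_forall_mem_likelyColours_le hAB hφ hδ hη fun c hc h =>
            (Finset.mem_filter.mp hρ).2 (h ▸ hS c hc)
    _ ≤ ∑ _ρ : I → K, Fintype.card I * √δ / η ^ Fintype.card I :=
        Finset.sum_le_univ_sum_of_nonneg fun _ => by positivity
    _ = _ := by simp

end Energy

section Exchangeability

variable {E K : Type*} {P : Finset (E → K)} {τ : Equiv.Perm E}

lemma bijOn_comp_perm (hτ : ∀ c ∈ P, c ∘ τ ∈ P) : BijOn (fun c => c ∘ τ) (P : Set (E → K)) P :=
  have hinj : Function.Injective fun c : E → K => c ∘ τ := τ.surjective.injective_comp_right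
  ⟨hτ, hinj.injOn, Finset.surjOn_of_injOn_of_card_le _ hτ hinj.injOn le_rfl⟩

variable [DecidableEq K]

lemma condLaw_map_perm (hτ : ∀ c ∈ P, c ∘ τ ∈ P) (A : Finset E) (e : E) (c : E → K) :
    condLaw P (A.map τ.toEmbedding) (τ e) c = condLaw P A e (c ∘ τ) := by
  have restrict_iff (d : E → K) :
      (A.map τ.toEmbedding).restrict d = (A.map τ.toEmbedding).restrict c ↔
        A.restrict (d ∘ τ) = A.restrict (c ∘ τ) := by
    simp only [funext_iff, Subtype.forall, Finset.restrict, Function.comp_apply,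
      Finset.forall_mem_map, Equiv.coe_toEmbedding]
  funext r
  obtain ⟨maps_to, inj_on, surj_on⟩ := bijOn_comp_perm hτ
  refine Finset.expect_nbij (fun d => d ∘ τ) (fun d hd => ?_) (fun d _ => rfl)
    (inj_on.mono fun d hd => (Finset.mem_filter.mp hd).1) fun d hd => ?_
  · obtain ⟨hdP, hd⟩ := Finset.mem_filter.mp hd
    exact Finset.mem_filter.mpr ⟨maps_to hdP, (restrict_iff d).mp hd⟩
  · obtain ⟨hdP, hd⟩ := Finset.mem_filter.mp hd
    obtain ⟨d', hd'P, rfl⟩ := surj_on hdP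
    exact ⟨d', Finset.mem_filter.mpr ⟨hd'P, (restrict_iff d').mpr hd⟩, rfl⟩

lemma expect_condLaw_map_perm (hτ : ∀ c ∈ P, c ∘ τ ∈ P) (A : Finset E) (e : E)
    (F : (K → ℝ) → ℝ) :
    𝔼 c ∈ P, F (condLaw P (A.map τ.toEmbedding) (τ e) c) = 𝔼 c ∈ P, F (condLaw P A e c) := by
  simp only [condLaw_map_perm hτ]
  obtain ⟨maps_to, inj_on, surj_on⟩ := bijOn_comp_perm hτ
  exact Finset.expect_nbij (fun c => c ∘ τ) maps_to (fun _ _ => rfl) inj_on surj_on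

end Exchangeability

section Edges

variable {m n N : ℕ}

/-- The edge `e` of `K_n` as an unordered pair of vertices. -/
def ends (e : EdgeType n) : Sym2 (Fin n) := s(e.1.1, e.1.2)

lemma ends_injective : Function.Injective (ends : EdgeType n → Sym2 (Fin n)) := by
  rintro ⟨⟨a, b⟩, hab⟩ ⟨⟨a', b'⟩, hab'⟩ h
  obtain ⟨rfl, rfl⟩ | ⟨rfl, rfl⟩ := Sym2.eq_iff.mp h
  · rfl
  · exact absurd hab' (not_lt_of_gt hab)

lemma ends_edgeOf (i j : Fin n) (h : i ≠ j) : ends (edgeOf i j h) = s(i, j) := by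
  by_cases hij : i < j
  · have : edgeOf i j h = ⟨(i, j), hij⟩ := dif_pos hij
    simp only [this, ends]
  · have : edgeOf i j h = ⟨(j, i), (not_lt.mp hij).lt_of_ne' h⟩ := dif_neg hij
    simp only [this, ends, Sym2.eq_swap]

/-- The map on edges induced by an injective map on vertices. -/
def edgeMap (ψ : Fin m ↪ Fin n) : EdgeType m ↪ EdgeType n where
  toFun e := edgeOf (ψ e.1.1) (ψ e.1.2) fun h => e.2.ne (ψ.injective h)
  inj' e e' h := by
    have := congrArg ends h
    simp only [ends_edgeOf, ← Sym2.map_mk] at this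
    exact ends_injective (Sym2.map.injective ψ.injective this)

lemma ends_edgeMap (ψ : Fin m ↪ Fin n) (e : EdgeType m) : ends (edgeMap ψ e) = (ends e).map ψ :=
  ends_edgeOf _ _ fun h => e.2.ne (ψ.injective h)

lemma HereditaryK.comp_edgeMap_mem {k : ℕ} {Q : ∀ n, Set (EdgeType n → Fin k)}
    (hQ : HereditaryK k Q) (ψ : Fin m ↪ Fin n) {c : EdgeType n → Fin k} (hc : c ∈ Q n) :
    c ∘ edgeMap ψ ∈ Q m := hQ m n ψ ψ.injective c hc

/-- The permutation of the edges induced by a permutation of the vertices. -/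
def edgePerm (σ : Equiv.Perm (Fin n)) : Equiv.Perm (EdgeType n) :=
  Equiv.ofBijective (edgeMap σ.toEmbedding)
    (Finite.injective_iff_bijective.mp (edgeMap σ.toEmbedding).injective)

lemma card_edgeType (n : ℕ) : Fintype.card (EdgeType n) = n.choose 2 := by
  have hrange : Set.range (ends : EdgeType n → Sym2 (Fin n)) = {z | ¬ z.IsDiag} := by
    ext z
    induction z with | _ i j => ?_
    refine ⟨?_, fun h => ⟨edgeOf i j (by simpa using h), ends_edgeOf ..⟩⟩
    rintro ⟨e, he⟩
    rw [mem_ofPred_eq, ← he]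
    exact fun h => e.2.ne h
  calc Fintype.card (EdgeType n)
      = Fintype.card {z : Sym2 (Fin n) // ¬ z.IsDiag} :=
        Fintype.card_congr ((Equiv.ofInjective ends ends_injective).trans (Equiv.setCongr hrange))
    _ = n.choose 2 := by rw [Sym2.card_subtype_not_diag, Fintype.card_fin]

/-- The edges of `K_n` meeting the vertex set `U`. -/
def incidentEdges (U : Finset (Fin n)) : Finset (EdgeType n) :=
  Finset.univ.filter fun e => ∃ u ∈ U, u ∈ ends e

lemma mem_incidentEdges {U : Finset (Fin n)} {e : EdgeType n} :
    e ∈ incidentEdges U ↔ ∃ u ∈ U, u ∈ ends e := by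
  simp only [incidentEdges, Finset.mem_filter_univ]

lemma incidentEdges_mono {U V : Finset (Fin n)} (h : U ⊆ V) :
    incidentEdges U ⊆ incidentEdges V := fun _ he => by
  obtain ⟨u, hu, hue⟩ := mem_incidentEdges.mp he
  exact mem_incidentEdges.mpr ⟨u, h hu, hue⟩

lemma card_incidentEdges_le (U : Finset (Fin n)) : (incidentEdges U).card ≤ U.card * n := by
  have hsub : (incidentEdges U).image ends ⊆
      (U ×ˢ Finset.univ).image fun p : Fin n × Fin n => s(p.1, p.2) := by
    intro z hz
    obtain ⟨e, he, rfl⟩ := Finset.mem_image.mp hz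
    obtain ⟨u, hu, v, hv⟩ := mem_incidentEdges.mp he
    exact Finset.mem_image.mpr ⟨(u, v), by simp [hu], hv.symm⟩
  calc (incidentEdges U).card = ((incidentEdges U).image ends).card :=
        (Finset.card_image_of_injective _ ends_injective).symm
    _ ≤ (U ×ˢ (Finset.univ : Finset (Fin n))).card :=
        (Finset.card_le_card hsub).trans Finset.card_image_le
    _ = U.card * n := by rw [Finset.card_product, Finset.card_univ, Fintype.card_fin]

lemma incidentEdges_map_edgePerm (σ : Equiv.Perm (Fin n)) (U : Finset (Fin n)) :
    (incidentEdges U).map (edgePerm σ).toEmbedding = incidentEdges (U.map σ.toEmbedding) := by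
  ext f
  obtain ⟨e, rfl⟩ := (edgePerm σ).surjective f
  have hends : ends (edgePerm σ e) = (ends e).map σ := ends_edgeMap _ e
  simp [mem_incidentEdges, hends]

lemma exists_perm_comp_eq {α β : Type*} [Finite β] {g g' : α → β} (hg : Function.Injective g)
    (hg' : Function.Injective g') : ∃ σ : Equiv.Perm β, ∀ a, σ (g a) = g' a := by
  classical
  have := Fintype.ofFinite β
  let range_equiv : {b // b ∈ Set.range g} ≃ {b // b ∈ Set.range g'} :=
    (Equiv.ofInjective g hg).symm.trans (Equiv.ofInjective g' hg')
  refine ⟨range_equiv.extendSubtype, fun a => ?_⟩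
  rw [range_equiv.extendSubtype_apply_of_mem _ (mem_range_self a)]
  have := Equiv.ofInjective_symm_apply hg a
  simp [range_equiv, this]

lemma exists_perm_map_eq_edgePerm_eq {U U' : Finset (Fin n)} {e e' : EdgeType n}
    (hU : U.card = U'.card) (he : e ∉ incidentEdges U) (he' : e' ∉ incidentEdges U') :
    ∃ σ : Equiv.Perm (Fin n), U.map σ.toEmbedding = U' ∧ edgePerm σ e = e' := by
  have injective_elim {V : Finset (Fin n)} {f : EdgeType n} (hf : f ∉ incidentEdges V)
      {h : U → Fin n} (hinj : Function.Injective h) (hV : ∀ u, h u ∈ V) :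
      Function.Injective (Sum.elim h ![f.1.1, f.1.2]) := by
    rw [mem_incidentEdges] at hf
    push Not at hf
    refine hinj.sumElim ?_ fun u i heq => hf _ (hV u) ?_
    · simpa [Fin.forall_fin_two, Function.Injective] using ⟨f.2.ne, f.2.ne'⟩
    · rw [heq]
      fin_cases i
      exacts [Sym2.mem_mk_left .., Sym2.mem_mk_right ..]
  let toU' : U ≃ U' := Finset.equivOfCardEq hU
  obtain ⟨σ, hσ⟩ := exists_perm_comp_eq
    (injective_elim he Subtype.val_injective fun u => u.2)
    (injective_elim he' (Subtype.val_injective.comp toU'.injective) fun u => (toU' u).2)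
  refine ⟨σ, Finset.eq_of_subset_of_card_le (fun v hv => ?_) (by simp [hU]), ends_injective ?_⟩
  · obtain ⟨u, hu, rfl⟩ := Finset.mem_map.mp hv
    have : σ u = toU' ⟨u, hu⟩ := hσ (.inl ⟨u, hu⟩)
    exact this ▸ (toU' ⟨u, hu⟩).2
  · have h0 : σ e.1.1 = e'.1.1 := hσ (.inr 0)
    have h1 : σ e.1.2 = e'.1.2 := hσ (.inr 1)
    refine (ends_edgeMap σ.toEmbedding e).trans ?_
    rw [ends, Sym2.map_mk, Equiv.coe_toEmbedding, h0, h1, ends]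

end Edges

section Templates

variable {k n : ℕ} {t : EdgeType n → Finset (Fin k)} {P : ∀ n, Set (EdgeType n → Fin k)}

lemma templateEnt_eq_sum_log_div (ht : ∀ e, (t e).Nonempty) :
    templateEnt t = (∑ e, Real.log (t e).card) / Real.log k := by
  rw [templateEnt, Real.logb, Real.log_prod fun e _ => Nat.cast_ne_zero.mpr (ht e).card_ne_zero]

lemma templateEnt_nonneg (ht : ∀ e, (t e).Nonempty) : 0 ≤ templateEnt t := by
  rw [templateEnt_eq_sum_log_div ht]
  exact div_nonneg (Finset.sum_nonneg fun e _ => Real.log_natCast_nonneg _)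
    (Real.log_natCast_nonneg k)

lemma templateEnt_le_choose_two (ht : ∀ e, (t e).Nonempty) : templateEnt t ≤ n.choose 2 := by
  rw [templateEnt_eq_sum_log_div ht]
  refine div_le_of_le_mul₀ (Real.log_natCast_nonneg k) (Nat.cast_nonneg _) ?_
  rw [← card_edgeType, ← Finset.card_univ, ← nsmul_eq_mul, ← Finset.sum_const]
  refine Finset.sum_le_sum fun e _ => Real.log_le_log (Nat.cast_pos.mpr (ht e).card_pos) ?_
  exact_mod_cast (card_finset_fin_le (t e))

lemma templateEnt_le_logb_card (ht : ∀ e, (t e).Nonempty) (htP : realisations t ⊆ P n) :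
    templateEnt t ≤ Real.logb k (Nat.card (P n)) := by
  have prod_pos : (0 : ℝ) < ∏ e, ((t e).card : ℝ) :=
    Finset.prod_pos fun e _ => Nat.cast_pos.mpr (ht e).card_pos
  have prod_le : ∏ e, (t e).card ≤ Nat.card (P n) := by
    rw [← Fintype.card_piFinset, Nat.card_coe_set_eq, ← Set.ncard_coe_finset]
    exact Set.ncard_le_ncard fun c hc => htP (Fintype.mem_piFinset.mp hc)
  refine div_le_div_of_nonneg_right (Real.log_le_log prod_pos ?_) (Real.log_natCast_nonneg k)
  exact_mod_cast prod_le

lemma templateEnt_le_exTemplate (ht : ∀ e, (t e).Nonempty) (htP : realisations t ⊆ P n) :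
    templateEnt t ≤ exTemplate P n := by
  refine le_csSup ⟨n.choose 2, ?_⟩ ⟨t, ht, htP, rfl⟩
  rintro _ ⟨t, ht, -, rfl⟩
  exact templateEnt_le_choose_two ht

lemma exTemplate_nonneg (P : ∀ n, Set (EdgeType n → Fin k)) (n : ℕ) : 0 ≤ exTemplate P n :=
  Real.sSup_nonneg fun _ ⟨_, ht, _, hx⟩ => hx ▸ templateEnt_nonneg ht

lemma exTemplate_le_logb_card (P : ∀ n, Set (EdgeType n → Fin k)) (n : ℕ) :
    exTemplate P n ≤ Real.logb k (Nat.card (P n)) :=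
  Real.sSup_le (fun _ ⟨_, ht, htP, hx⟩ => hx ▸ templateEnt_le_logb_card ht htP)
    (div_nonneg (Real.log_natCast_nonneg _) (Real.log_natCast_nonneg k))

/- A template with a realisation outside `P n` is only known to have entropy at most `C(n,2)`. -/
lemma templateEnt_le_exTemplate_add_indicator {α : Type*} {T : α → EdgeType n → Finset (Fin k)}
    {a : α} (ht : ∀ e, (T a e).Nonempty) :
    templateEnt (T a) ≤ exTemplate P n +
      n.choose 2 * {a | ∃ ρ ∉ P n, ∀ e, ρ e ∈ T a e}.indicator 1 a := by
  by_cases ha : a ∈ {a | ∃ ρ ∉ P n, ∀ e, ρ e ∈ T a e}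
  · rw [indicator_of_mem ha, Pi.one_apply, mul_one]
    exact (templateEnt_le_choose_two ht).trans (le_add_of_nonneg_left (exTemplate_nonneg P n))
  · rw [indicator_of_notMem ha, mul_zero, add_zero]
    refine templateEnt_le_exTemplate ht fun ρ hρ => ?_
    by_contra hρP
    exact ha ⟨ρ, hρP, hρ⟩

end Templates

section Exchangeable

lemma exists_succ_le_add_inv {a : ℕ → ℝ} (h0 : ∀ i, 0 ≤ a i) (h1 : ∀ i, a i ≤ 1) {M : ℕ}
    (hM : 0 < M) : ∃ i < M, a (i + 1) ≤ a i + (M : ℝ)⁻¹ := by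
  have total : ∑ i ∈ Finset.range M, a (i + 1) ≤ ∑ i ∈ Finset.range M, (a i + (M : ℝ)⁻¹) := by
    have telescope := Finset.sum_range_sub a M
    rw [Finset.sum_sub_distrib] at telescope
    rw [Finset.sum_add_distrib, Finset.sum_const, Finset.card_range, nsmul_eq_mul,
      mul_inv_cancel₀ (Nat.cast_ne_zero.mpr hM.ne')]
    linarith [h0 0, h1 M]
  simpa only [Finset.mem_range] using
    Finset.exists_le_of_sum_le (Finset.nonempty_range_iff.mpr hM.ne') total

variable {K : Type*} {N : ℕ} {U U' : Finset (Fin N)} {e e' : EdgeType N}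
  {P : Finset (EdgeType N → K)}

/-- `P` is closed under relabelling the vertices, so that a uniformly random element of `P` is an
exchangeable random colouring. -/
def Exchangeable (P : Finset (EdgeType N → K)) : Prop :=
  ∀ σ : Equiv.Perm (Fin N), ∀ c ∈ P, c ∘ edgePerm σ ∈ P

variable [DecidableEq K]

lemma Exchangeable.expect_condLaw_incidentEdges_eq (hP : Exchangeable P) (hU : U.card = U'.card)
    (he : e ∉ incidentEdges U) (he' : e' ∉ incidentEdges U') (F : (K → ℝ) → ℝ) :
    𝔼 c ∈ P, F (condLaw P (incidentEdges U) e c) =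
      𝔼 c ∈ P, F (condLaw P (incidentEdges U') e' c) := by
  obtain ⟨σ, rfl, rfl⟩ := exists_perm_map_eq_edgePerm_eq hU he he'
  rw [← incidentEdges_map_edgePerm, expect_condLaw_map_perm (hP σ)]

variable [Fintype K]

lemma Exchangeable.exists_energy_le_add_inv (hP : Exchangeable P) {M s : ℕ} (hM : 0 < M)
    (hN : M * s + 2 ≤ N) :
    ∃ U : Finset (Fin N), U.card + s ≤ M * s ∧
      ∀ U', U ⊆ U' → U'.card = U.card + s → ∀ e ∉ incidentEdges U',
        energy P (incidentEdges U') e ≤ energy P (incidentEdges U) e + (M : ℝ)⁻¹ := by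
  let initial (q : ℕ) : Finset (Fin N) := Finset.univ.filter fun v => v.val < q
  let lastEdge : EdgeType N :=
    ⟨(⟨N - 2, by omega⟩, ⟨N - 1, by omega⟩), Fin.mk_lt_mk.mpr (by omega)⟩
  have card_initial {q : ℕ} (hq : q ≤ M * s) : (initial q).card = q := by
    rw [Fin.card_filter_val_lt]
    omega
  have lastEdge_notMem {q : ℕ} (hq : q ≤ M * s) : lastEdge ∉ incidentEdges (initial q) := by
    rw [mem_incidentEdges]
    rintro ⟨u, hu, hue⟩
    have hu_lt : u.val < q := (Finset.mem_filter.mp hu).2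
    obtain rfl | rfl := Sym2.mem_iff.mp hue <;> dsimp only [lastEdge] at hu_lt <;> omega
  obtain ⟨i, hi, hsmall⟩ := exists_succ_le_add_inv
    (a := fun i => energy P (incidentEdges (initial (i * s))) lastEdge)
    (fun i => energy_nonneg _ _ _) (fun i => energy_le_one _ _ _) hM
  have hi_succ : (i + 1) * s ≤ M * s := Nat.mul_le_mul_right s hi
  have hi_le : i * s ≤ M * s := Nat.mul_le_mul_right s hi.le
  refine ⟨initial (i * s), by rw [card_initial hi_le]; linarith, fun U' hU' hcard e he => ?_⟩
  have heU : e ∉ incidentEdges (initial (i * s)) := fun h => he (incidentEdges_mono hU' h)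
  rw [card_initial hi_le, ← Nat.succ_mul] at hcard
  calc energy P (incidentEdges U') e
      = energy P (incidentEdges (initial ((i + 1) * s))) lastEdge :=
        hP.expect_condLaw_incidentEdges_eq (hcard.trans (card_initial hi_succ).symm) he
          (lastEdge_notMem hi_succ) fun p => ∑ r, p r ^ 2
    _ ≤ energy P (incidentEdges (initial (i * s))) lastEdge + (M : ℝ)⁻¹ := hsmall
    _ = energy P (incidentEdges (initial (i * s))) e + (M : ℝ)⁻¹ := by
        congr 1
        exact hP.expect_condLaw_incidentEdges_eq rfl (lastEdge_notMem hi_le) heU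
          fun p => ∑ r, p r ^ 2

end Exchangeable

section CountingBound

variable {k n N : ℕ} {K : Type*} {e : EdgeType N} {i j : EdgeType n}

lemma card_filter_notMem_ends (e : EdgeType n) :
    (Finset.univ.filter fun v => v ∉ ends e).card + 2 = n := by
  have card_mem : (Finset.univ.filter fun v => v ∈ ends e).card = 2 := by
    rw [← Finset.card_pair e.2.ne]
    congr 1
    ext v
    simp [ends]
  have := Finset.card_filter_add_card_filter_not (s := Finset.univ) (fun v : Fin n => v ∈ ends e)
  rw [card_mem, Finset.card_univ, Fintype.card_fin] at this
  omega

lemma exists_mem_ends_notMem_ends (h : i ≠ j) : ∃ v ∈ ends i, v ∉ ends j := by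
  by_contra! hsub
  have hij : ends j = ends i := (Sym2.mem_and_mem_iff i.2.ne).mp
    ⟨hsub _ (Sym2.mem_mk_left ..), hsub _ (Sym2.mem_mk_right ..)⟩
  exact h (ends_injective hij.symm)

lemma edgeMap_mem_incidentEdges {U : Finset (Fin N)} {ι : Fin n ↪ Fin N} :
    edgeMap ι i ∈ incidentEdges U ↔ ∃ v ∈ ends i, ι v ∈ U := by
  simp [mem_incidentEdges, ends_edgeMap, and_comm]

variable [DecidableEq K] [Fintype K] {P : Finset (EdgeType N → K)} {η : ℝ}

lemma Exchangeable.exists_expect_indicator_le (hP : Exchangeable P) (hn : 2 ≤ n) {M : ℕ}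
    (hM : 0 < M) (hN : M * n ≤ N) (hη : 0 < η) {S : Set (EdgeType n → K)}
    (hS : ∀ ι : Fin n ↪ Fin N, ∀ c ∈ P, c ∘ edgeMap ι ∈ S) :
    ∃ U : Finset (Fin N), U.card ≤ M * n ∧ ∃ ι : Fin n ↪ Fin N,
      (∀ i, edgeMap ι i ∉ incidentEdges U) ∧
      𝔼 c ∈ P, {c | ∃ ρ ∉ S, ∀ i,
        ρ i ∈ likelyColours P (incidentEdges U) η (edgeMap ι i) c}.indicator 1 c ≤
          (Fintype.card K : ℝ) ^ n.choose 2 *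
            (n.choose 2 * √(M : ℝ)⁻¹ / η ^ n.choose 2) := by
  obtain ⟨s, rfl⟩ := Nat.exists_eq_add_of_le' hn
  have hMs : M * s + 2 ≤ N := by linarith [Nat.mul_add M s 2]
  obtain ⟨U, hUcard, hU⟩ := hP.exists_energy_le_add_inv hM hMs
  obtain ⟨ι, hι⟩ : ∃ ι : Fin (s + 2) ↪ Fin N, ∀ v, ι v ∉ U := by
    obtain ⟨ι, hι⟩ := Function.Embedding.exists_of_card_le_finset (α := Fin (s + 2)) (s := Uᶜ) <| by
      rw [Finset.card_compl, Fintype.card_fin, Fintype.card_fin]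
      omega
    exact ⟨ι, fun v => Finset.mem_compl.mp (hι (mem_range_self v))⟩
  let otherVertices (i : EdgeType (s + 2)) : Finset (Fin N) :=
    (Finset.univ.filter fun v => v ∉ ends i).map ι
  have map_mem_otherVertices {i : EdgeType (s + 2)} {v : Fin (s + 2)} :
      ι v ∈ otherVertices i ↔ v ∉ ends i := by
    rw [Finset.mem_map', Finset.mem_filter_univ]
  have card_union (i : EdgeType (s + 2)) : (U ∪ otherVertices i).card = U.card + s := by
    rw [Finset.card_union_of_disjoint, Finset.card_map]
    · have := card_filter_notMem_ends i
      omega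
    · refine Finset.disjoint_right.mpr fun w hw => ?_
      obtain ⟨v, -, rfl⟩ := Finset.mem_map.mp hw
      exact hι v
  have notMem_incidentEdges_union (i : EdgeType (s + 2)) :
      edgeMap ι i ∉ incidentEdges (U ∪ otherVertices i) := fun h => by
    obtain ⟨v, hv, hvU⟩ := edgeMap_mem_incidentEdges.mp h
    rw [Finset.mem_union, map_mem_otherVertices] at hvU
    exact hvU.elim (hι v) fun hv' => hv' hv
  have mem_incidentEdges_union (i j : EdgeType (s + 2)) (hij : i ≠ j) :
      edgeMap ι i ∈ incidentEdges (U ∪ otherVertices j) := by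
    obtain ⟨v, hvi, hvj⟩ := exists_mem_ends_notMem_ends hij
    exact edgeMap_mem_incidentEdges.mpr
      ⟨v, hvi, Finset.mem_union_right _ (map_mem_otherVertices.mpr hvj)⟩
  have bound := expect_indicator_exists_notMem_likelyColours_le
    (fun i => incidentEdges_mono Finset.subset_union_left) mem_incidentEdges_union
    (fun i => hU _ Finset.subset_union_left (card_union i) _ (notMem_incidentEdges_union i))
    hη (hS ι)
  rw [card_edgeType] at bound
  refine ⟨U, by linarith [Nat.mul_add M s 2], ι, fun i hi => ?_, bound⟩
  obtain ⟨v, -, hv⟩ := edgeMap_mem_incidentEdges.mp hi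
  exact hι v hv

lemma Exchangeable.expect_log_card_likelyColours_le {P : Finset (EdgeType N → Fin k)}
    (hP : Exchangeable P) (hPne : P.Nonempty) (hk : 1 < k) (hη : η * k ≤ 1) (hn : 2 ≤ n)
    {Q : ∀ n, Set (EdgeType n → Fin k)} {U : Finset (Fin N)} {ι : Fin n ↪ Fin N}
    (hι : ∀ i, edgeMap ι i ∉ incidentEdges U) {D : ℝ}
    (hD : 𝔼 c ∈ P, {c | ∃ ρ ∉ Q n, ∀ i,
      ρ i ∈ likelyColours P (incidentEdges U) η (edgeMap ι i) c}.indicator 1 c ≤ D)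
    (he : e ∉ incidentEdges U) :
    𝔼 c ∈ P, Real.log (likelyColours P (incidentEdges U) η e c).card ≤
      (exTemplate Q n / n.choose 2 + D) * Real.log k := by
  have hlog : 0 < Real.log k := Real.log_pos (Nat.one_lt_cast.mpr hk)
  have hchoose : (0 : ℝ) < n.choose 2 := Nat.cast_pos.mpr (Nat.choose_pos hn)
  let template (c : EdgeType N → Fin k) (i : EdgeType n) : Finset (Fin k) :=
    likelyColours P (incidentEdges U) η (edgeMap ι i) c
  have template_nonempty (c) (hc : c ∈ P) (i : EdgeType n) : (template c i).Nonempty :=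
    likelyColours_nonempty (by rwa [Fintype.card_fin]) hc
  have same_expectation (i : EdgeType n) : 𝔼 c ∈ P, Real.log (template c i).card =
      𝔼 c ∈ P, Real.log (likelyColours P (incidentEdges U) η e c).card :=
    hP.expect_condLaw_incidentEdges_eq rfl (hι i) he
      fun p => Real.log (Finset.univ.filter fun r => η ≤ p r).card
  rw [← div_le_iff₀ hlog, ← mul_le_mul_iff_right₀ hchoose]
  calc n.choose 2 * ((𝔼 c ∈ P, Real.log (likelyColours P (incidentEdges U) η e c).card) /
        Real.log k)
      = 𝔼 c ∈ P, templateEnt (template c) := by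
        rw [Finset.expect_congr rfl fun c hc => templateEnt_eq_sum_log_div (template_nonempty c hc),
          ← Finset.expect_div, Finset.expect_sum_comm,
          Finset.sum_congr rfl fun i _ => same_expectation i, Finset.sum_const, Finset.card_univ,
          card_edgeType, nsmul_eq_mul, mul_div_assoc]
    _ ≤ 𝔼 c ∈ P, (exTemplate Q n + n.choose 2 *
          {c | ∃ ρ ∉ Q n, ∀ i, ρ i ∈ template c i}.indicator 1 c) :=
        Finset.expect_le_expect fun c hc =>
          templateEnt_le_exTemplate_add_indicator (template_nonempty c hc)
    _ ≤ exTemplate Q n + n.choose 2 * D := by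
        rw [Finset.expect_add_distrib, Finset.expect_const hPne, ← Finset.mul_expect]
        gcongr
    _ = n.choose 2 * (exTemplate Q n / n.choose 2 + D) := by
        field_simp

lemma HereditaryK.logb_card_le {Q : ∀ n, Set (EdgeType n → Fin k)} (hQ : HereditaryK k Q)
    (hQN : (Q N).Nonempty) (hk : 1 < k) (hn : 2 ≤ n) {M : ℕ} (hM : 0 < M) (hN : M * n ≤ N)
    (hη : 0 < η) (hηk : η * k ≤ 1) :
    Real.logb k (Nat.card (Q N)) ≤ M * n * N + N.choose 2 *
      (exTemplate Q n / n.choose 2 +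
        k ^ n.choose 2 * (n.choose 2 * √(M : ℝ)⁻¹ / η ^ n.choose 2) +
        2 * k * √η / Real.log k) := by
  have hlog : 0 < Real.log k := Real.log_pos (Nat.one_lt_cast.mpr hk)
  let P : Finset (EdgeType N → Fin k) := (Q N).toFinite.toFinset
  have mem_P {c} : c ∈ P ↔ c ∈ Q N := Set.Finite.mem_toFinset _
  have hPne : P.Nonempty := (Set.Finite.toFinset_nonempty _).mpr hQN
  have hP : Exchangeable P := fun σ c hc =>
    mem_P.mpr (hQ.comp_edgeMap_mem σ.toEmbedding (mem_P.mp hc))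
  obtain ⟨U, hU, ι, hι, hD⟩ := hP.exists_expect_indicator_le hn hM hN hη
    fun (ι : Fin n ↪ Fin N) c hc => hQ.comp_edgeMap_mem ι (mem_P.mp hc)
  rw [Fintype.card_fin] at hD
  set D : ℝ := k ^ n.choose 2 * (n.choose 2 * √(M : ℝ)⁻¹ / η ^ n.choose 2)
  have hD0 : 0 ≤ D := by positivity
  have per_edge : 0 ≤ (exTemplate Q n / n.choose 2 + D) * Real.log k + 2 * k * √η := by
    have := exTemplate_nonneg Q n
    exact add_nonneg (mul_nonneg (add_nonneg (by positivity) hD0) hlog.le) (by positivity)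
  have card_inc : (incidentEdges U).card ≤ M * n * N :=
    (card_incidentEdges_le U).trans (Nat.mul_le_mul_right N hU)
  rw [Real.logb, div_le_iff₀ hlog, Nat.card_eq_card_finite_toFinset (Q N).toFinite]
  calc Real.log P.card
      ≤ (incidentEdges U).card * Real.log k + ∑ e ∈ (incidentEdges U)ᶜ,
          (𝔼 c ∈ P, Real.log (likelyColours P (incidentEdges U) η e c).card + 2 * k * √η) := by
        simpa only [Fintype.card_fin] using
          log_card_le_sum_expect_log_card_likelyColours hPne (incidentEdges U) η
    _ ≤ (incidentEdges U).card * Real.log k + ∑ _e : EdgeType N,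
          ((exTemplate Q n / n.choose 2 + D) * Real.log k + 2 * k * √η) := by
        gcongr
        refine (Finset.sum_le_sum fun e he => ?_).trans
          (Finset.sum_le_univ_sum_of_nonneg fun _ => per_edge)
        gcongr
        exact hP.expect_log_card_likelyColours_le hPne hk hηk hn hι hD (Finset.mem_compl.mp he)
    _ ≤ (M * n * N) * Real.log k + N.choose 2 *
          ((exTemplate Q n / n.choose 2 + D) * Real.log k + 2 * k * √η) := by
        rw [Finset.sum_const, Finset.card_univ, card_edgeType, nsmul_eq_mul]
        gcongr
        exact_mod_cast card_inc
    _ = _ := by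
        field_simp

end CountingBound

section Asymptotics

open scoped Topology

lemma tendsto_natCast_div_choose_two :
    Tendsto (fun N : ℕ => (N : ℝ) / N.choose 2) atTop (𝓝 0) := by
  have hlim : Tendsto (fun N : ℕ => 2 / ((N : ℝ) - 1)) atTop (𝓝 0) :=
    tendsto_const_nhds.div_atTop (tendsto_atTop_add_const_right _ (-1) tendsto_natCast_atTop_atTop)
  refine hlim.congr' ?_
  filter_upwards [eventually_ge_atTop 2] with N hN
  have hN : (2 : ℝ) ≤ N := Nat.ofNat_le_cast.mpr hN
  have h0 : (N : ℝ) ≠ 0 := by linarith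
  have h1 : (N : ℝ) - 1 ≠ 0 := by linarith
  rw [Nat.cast_choose_two]
  field_simp

lemma HereditaryK.eventually_logb_card_div_le {k n : ℕ} {Q : ∀ n, Set (EdgeType n → Fin k)}
    (hQ : HereditaryK k Q) (hne : ∀ n, (Q n).Nonempty) (hk : 1 < k) (hn : 2 ≤ n) {ε : ℝ}
    (hε : 0 < ε) :
    ∀ᶠ N in atTop, Real.logb k (Nat.card (Q N)) / N.choose 2 ≤
      exTemplate Q n / n.choose 2 + ε := by
  have hε3 : 0 < ε / 3 := by positivity
  obtain ⟨η, hη, hηk, hη_small⟩ :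
      ∃ η : ℝ, 0 < η ∧ η * k ≤ 1 ∧ 2 * k * √η / Real.log k ≤ ε / 3 := by
    have lim_mul : Tendsto (fun η : ℝ => η * k) (𝓝[>] 0) (𝓝 0) :=
      tendsto_nhdsWithin_of_tendsto_nhds (Continuous.tendsto' (by fun_prop) _ _ (by simp))
    have lim_sqrt : Tendsto (fun η : ℝ => 2 * k * √η / Real.log k) (𝓝[>] 0) (𝓝 0) :=
      tendsto_nhdsWithin_of_tendsto_nhds (Continuous.tendsto' (by fun_prop) _ _ (by simp))
    exact (eventually_mem_nhdsWithin.and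
      ((lim_mul.eventually_le_const one_pos).and (lim_sqrt.eventually_le_const hε3))).exists
  obtain ⟨M, hM, hM_small⟩ : ∃ M : ℕ, 0 < M ∧
      k ^ n.choose 2 * (n.choose 2 * √(M : ℝ)⁻¹ / η ^ n.choose 2) ≤ ε / 3 := by
    have lim_sqrt : Tendsto (fun M : ℕ => √(M : ℝ)⁻¹) atTop (𝓝 0) :=
      Real.sqrt_zero ▸ (tendsto_inv_atTop_nhds_zero_nat (𝕜 := ℝ)).sqrt
    have lim := ((lim_sqrt.const_mul (n.choose 2 : ℝ)).div_const (η ^ n.choose 2)).const_mul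
      ((k : ℝ) ^ n.choose 2)
    rw [mul_zero, zero_div, mul_zero] at lim
    exact ((eventually_gt_atTop 0).and (lim.eventually_le_const hε3)).exists
  have lim := tendsto_natCast_div_choose_two.const_mul ((M : ℝ) * n)
  rw [mul_zero] at lim
  filter_upwards [lim.eventually_le_const hε3, eventually_ge_atTop (M * n), eventually_ge_atTop 2]
    with N hN_small hMN hN
  have hchoose : (0 : ℝ) < N.choose 2 := Nat.cast_pos.mpr (Nat.choose_pos hN)
  rw [← mul_div_assoc, div_le_iff₀ hchoose] at hN_small
  rw [div_le_iff₀ hchoose]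
  calc Real.logb k (Nat.card (Q N))
      ≤ M * n * N + N.choose 2 * (exTemplate Q n / n.choose 2 +
          k ^ n.choose 2 * (n.choose 2 * √(M : ℝ)⁻¹ / η ^ n.choose 2) +
          2 * k * √η / Real.log k) := hQ.logb_card_le (hne N) hk hn hM hMN hη hηk
    _ ≤ ε / 3 * N.choose 2 + N.choose 2 * (exTemplate Q n / n.choose 2 + ε / 3 + ε / 3) := by
        gcongr
    _ = (exTemplate Q n / n.choose 2 + ε) * N.choose 2 := by ring

lemma exists_tendsto_of_eventually_le_add {u v : ℕ → ℝ} (hu : BddBelow (range u))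
    (huv : ∀ n, u n ≤ v n) {n₀ : ℕ}
    (h : ∀ n ≥ n₀, ∀ ε > 0, ∀ᶠ N in atTop, v N ≤ u n + ε) :
    ∃ l, Tendsto u atTop (𝓝 l) ∧ Tendsto v atTop (𝓝 l) ∧ ∀ n ≥ n₀, l ≤ u n := by
  set l := sInf (u '' Ici n₀)
  have le_u : ∀ n ≥ n₀, l ≤ u n := fun n hn =>
    csInf_le (hu.mono (image_subset_range _ _)) (mem_image_of_mem u hn)
  have eventually_le_u : ∀ᶠ n in atTop, l ≤ u n := (eventually_ge_atTop n₀).mono le_u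
  have tendsto_v : Tendsto v atTop (𝓝 l) := by
    refine tendsto_order.mpr ⟨fun a ha => ?_, fun b hb => ?_⟩
    · exact eventually_le_u.mono fun n hn => ha.trans_le (hn.trans (huv n))
    · obtain ⟨_, ⟨n, hn, rfl⟩, hnb⟩ := exists_lt_of_csInf_lt (nonempty_Ici.image u) hb
      filter_upwards [h n hn ((b - u n) / 2) (by linarith)] with N hN
      linarith
  exact ⟨l, tendsto_of_tendsto_of_tendsto_of_le_of_le' tendsto_const_nhds tendsto_v
    eventually_le_u (.of_forall huv), tendsto_v, le_u⟩

end Asymptotics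

/-- **Theorem (counting colourings in a hereditary property).**
Let `P` be a hereditary property of `[k]`-decorated graphs with `P_n ≠ ∅` for all `n`
and let `ε > 0`.  Then `π(P) = lim ex(n,P_n)/C(n,2)` exists and there is `n₀` such
that for all `n ≥ n₀`, `k^{π(P)·C(n,2)} ≤ |P_n| ≤ k^{(π(P)+ε)·C(n,2)}`. -/
theorem counting_decorated_graphs (k : ℕ) (hk : 2 ≤ k)
    (P : ∀ n, Set (EdgeType n → Fin k)) (hP : HereditaryK k P)
    (hne : ∀ n, (P n).Nonempty) (ε : ℝ) (hε : 0 < ε) :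
    ∃ π : ℝ,
      Tendsto (fun n : ℕ => exTemplate P n / (n.choose 2 : ℝ)) atTop (nhds π) ∧
      ∃ n₀ : ℕ, ∀ n ≥ n₀,
        (k : ℝ) ^ (π * (n.choose 2 : ℝ)) ≤ (Nat.card (P n) : ℝ) ∧
        (Nat.card (P n) : ℝ) ≤ (k : ℝ) ^ ((π + ε) * (n.choose 2 : ℝ)) := by
  have one_lt_k : (1 : ℝ) < k := Nat.one_lt_cast.mpr hk
  let u (n : ℕ) : ℝ := exTemplate P n / n.choose 2
  let v (n : ℕ) : ℝ := Real.logb k (Nat.card (P n)) / n.choose 2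
  have u_nonneg (n) : 0 ≤ u n := div_nonneg (exTemplate_nonneg P n) (Nat.cast_nonneg _)
  have u_le_v (n) : u n ≤ v n :=
    div_le_div_of_nonneg_right (exTemplate_le_logb_card P n) (Nat.cast_nonneg _)
  obtain ⟨π, hu, hv, le_u⟩ := exists_tendsto_of_eventually_le_add
    ⟨0, forall_mem_range.mpr u_nonneg⟩ u_le_v
    fun n hn δ hδ => hP.eventually_logb_card_div_le hne hk hn hδ
  refine ⟨π, hu, eventually_atTop.mp ?_⟩
  filter_upwards [eventually_ge_atTop 2, hv.eventually_le_const (lt_add_of_pos_right π hε)]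
    with n hn v_le
  have choose_pos : (0 : ℝ) < n.choose 2 := Nat.cast_pos.mpr (Nat.choose_pos hn)
  have card_pos : (0 : ℝ) < Nat.card (P n) :=
    have := (hne n).to_subtype
    Nat.cast_pos.mpr Nat.card_pos
  rw [← Real.le_logb_iff_rpow_le one_lt_k card_pos, ← Real.logb_le_iff_le_rpow one_lt_k card_pos,
    ← le_div_iff₀ choose_pos, ← div_le_iff₀ choose_pos]
  exact ⟨(le_u n hn).trans (u_le_v n), v_le⟩

end
end
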